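/- Inductive step for the greatest fixed point case of the main theorem: Let ⟨P, {→a}_{a∈L}⟩ be a PLTS, and let G₁ be a pLμ formula and X a variable such that νX.G₁ is in normal form. Assume the inductive hypothesis: for every interpretation ρ' : Var → (P → [0,1]) and every q ∈ P, ⟦G₁⟧ρ'(q) = Val↓(𝒢^{G₁}_{ρ'})(⟨q,G₁⟩) = Val↑(𝒢^{G₁}_{ρ'})(⟨q,G₁⟩). Then for every interpretation ρ and every p ∈ P, ⟦νX.G₁⟧ρ(p) = Val↓(𝒢^{νX.G₁}_ρ)(⟨p,νX.G₁⟩) = Val↑(𝒢^{νX.G₁}_ρ)(⟨p,νX.G₁⟩). -/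

import Mathlib

noncomputable section

open scoped unitInterval Classical

instance : Fact ((0:ℝ) ≤ 1) := ⟨zero_le_one⟩

/-- A discrete probability distribution on `X`: a `[0,1]`-valued (indeed nonnegative)
function summing to `1` (hence with countable support). -/
structure PDist (X : Type) where
  f : X → ℝ
  nonneg : ∀ x, 0 ≤ f x
  sum_one : HasSum f 1

/-- A probabilistic labeled transition system over labels `L` with states `P`:
for each label `a` and state `p`, the set of distributions `d` with `p →a d`. -/
structure PLTS (L P : Type) where
  trans : L → P → Set (PDist P)

/-- Formulas of the probabilistic modal μ-calculus, with variables drawn from `ℕ`. -/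
inductive pLmu (L : Type) : Type
  | var : ℕ → pLmu L
  | dia : L → pLmu L → pLmu L
  | box : L → pLmu L → pLmu L
  | or  : pLmu L → pLmu L → pLmu L
  | and : pLmu L → pLmu L → pLmu L
  | mu  : ℕ → pLmu L → pLmu L
  | nu  : ℕ → pLmu L → pLmu L

namespace pLmu

variable {L P : Type}

/-- free variables -/
def freeVars : pLmu L → Set ℕ
  | .var X => {X}
  | .dia _ G => freeVars G
  | .box _ G => freeVars G
  | .or G H => freeVars G ∪ freeVars H
  | .and G H => freeVars G ∪ freeVars H
  | .mu X G => freeVars G \ {X}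
  | .nu X G => freeVars G \ {X}

/-- the list of variables bound by the μ- and ν-binders occurring in a formula -/
def binders : pLmu L → List ℕ
  | .var _ => []
  | .dia _ G => binders G
  | .box _ G => binders G
  | .or G H => binders G ++ binders H
  | .and G H => binders G ++ binders H
  | .mu X G => X :: binders G
  | .nu X G => X :: binders G

/-- A formula is in normal form if every binder binds a distinct variable and no
variable occurs both free and bound. -/
def NormalForm (F : pLmu L) : Prop :=
  F.binders.Nodup ∧ ∀ X ∈ F.binders, X ∉ F.freeVars

/-- A formula is closed if it has no free variables. -/
def Closed (F : pLmu L) : Prop := F.freeVars = ∅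

/-- The expected value of `g : P → [0,1]` under a distribution `d` on `P`
(the real number `∑ q, d(q) · g(q)`, which lies in `[0,1]`, viewed in `[0,1]`). -/
def distExp (d : PDist P) (g : P → unitInterval) : unitInterval :=
  Set.projIcc 0 1 zero_le_one (∑' q, d.f q * (g q : ℝ))

/-- The denotational semantics `⟦F⟧ρ : P → [0,1]` of a pLμ formula, where least
(resp. greatest) fixed points are given, à la Knaster–Tarski, as the infimum of
prefixed points (resp. supremum of postfixed points) in the complete lattice `P → [0,1]`. -/
def sem (M : PLTS L P) : pLmu L → (ℕ → P → unitInterval) → P → unitInterval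
  | .var X, ρ, p => ρ X p
  | .dia a G, ρ, p => sSup ((fun d => distExp d (sem M G ρ)) '' M.trans a p)
  | .box a G, ρ, p => sInf ((fun d => distExp d (sem M G ρ)) '' M.trans a p)
  | .or G H, ρ, p => sem M G ρ p ⊔ sem M H ρ p
  | .and G H, ρ, p => sem M G ρ p ⊓ sem M H ρ p
  | .mu X G, ρ, p => sInf {g : P → unitInterval | sem M G (Function.update ρ X g) ≤ g} p
  | .nu X G, ρ, p => sSup {g : P → unitInterval | g ≤ sem M G (Function.update ρ X g)} p

end pLmu

noncomputable section

open scoped unitInterval Classical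

/-- The three agents of a 2½-player game. -/
inductive Player : Type
  | one : Player
  | two : Player
  | nature : Player
deriving DecidableEq

/-- A 2½-player arena: a directed graph `(S, E)`, an assignment of states to the
players (Player 1, Player 2, Nature), and probabilistic transition data at Nature
states. -/
structure Arena (S : Type) where
  E : S → Set S
  owner : S → Player
  prob : S → S → ℝ

namespace Arena

variable {S : Type}

/-- Well-formedness: at every Nature state `s`, `prob s` is a probability
distribution whose support is exactly the set `E s` of successors of `s`. -/
def Wellformed (A : Arena S) : Prop :=
  ∀ s, A.owner s = Player.nature →
    (∀ t, 0 ≤ A.prob s t) ∧ HasSum (A.prob s) 1 ∧ A.E s = Function.support (A.prob s)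

/-- `s` is a terminal state if it has no successors. -/
def Terminal (A : Arena S) (s : S) : Prop := A.E s = ∅

end Arena

/-- An (unbounded memory deterministic) strategy for player `pl` in arena `A`:
given the history `hist` and the current state `s` (a non-terminal state owned by
`pl`), it picks a successor of `s`. -/
structure Strategy {S : Type} (A : Arena S) (pl : Player) where
  next : List S → S → S
  valid : ∀ (hist : List S) (s : S), A.owner s = pl → A.E s ≠ ∅ → next hist s ∈ A.E s

variable {S : Type}

/-- The Markov chain determined by a strategy profile `(σ1, σ2)` and initial state
`s0`: the tree of finite paths from `s0` in which nodes ending in a Player 1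
(resp. Player 2) state are extended uniquely according to `σ1` (resp. `σ2`), nodes
ending in a Nature state branch fully over the successors, and (for the purpose of
encoding finite completed paths as infinite sequences) nodes ending in a terminal
state are extended by repeating the terminal state. -/
inductive MC (A : Arena S) (σ1 : Strategy A Player.one) (σ2 : Strategy A Player.two)
    (s0 : S) : List S → Prop
  | root : MC A σ1 σ2 s0 [s0]
  | one (l : List S) (s : S) : MC A σ1 σ2 s0 (l ++ [s]) → A.owner s = Player.one →
      A.E s ≠ ∅ → MC A σ1 σ2 s0 (l ++ [s, σ1.next l s])
  | two (l : List S) (s : S) : MC A σ1 σ2 s0 (l ++ [s]) → A.owner s = Player.two →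
      A.E s ≠ ∅ → MC A σ1 σ2 s0 (l ++ [s, σ2.next l s])
  | nature (l : List S) (s t : S) : MC A σ1 σ2 s0 (l ++ [s]) →
      A.owner s = Player.nature → t ∈ A.E s → MC A σ1 σ2 s0 (l ++ [s, t])
  | term (l : List S) (s : S) : MC A σ1 σ2 s0 (l ++ [s]) → A.E s = ∅ →
      MC A σ1 σ2 s0 (l ++ [s, s])

/-- The space of completed paths, encoded as infinite sequences of states
(a finite completed path, i.e. one ending in a terminal state, is encoded by
repeating its terminal state forever). -/
def PathSpace (S : Type) : Type := ℕ → S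

instance : MeasurableSpace (PathSpace S) :=
  @MeasurableSpace.pi ℕ (fun _ => S) (fun _ => ⊤)

/-- The basic cylinder set of completed paths extending a finite path. -/
def cyl (l : List S) : Set (PathSpace S) :=
  {u | ∀ i : Fin l.length, u i = l.get i}

/-- the probability of a single step -/
def stepProb (A : Arena S) (s t : S) : ℝ :=
  if A.owner s = Player.nature then A.prob s t else 1

/-- The product of the probabilities of the Nature steps along a finite path. -/
def pathProb (A : Arena S) : List S → ℝ
  | [] => 1
  | [_] => 1
  | s :: t :: l => stepProb A s t * pathProb A (t :: l)

/-- The weight assigned to a basic cylinder: the product of the probabilities of its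
Nature steps if the underlying finite path belongs to the Markov chain, `0` otherwise. -/
def cylWeight (A : Arena S) (σ1 : Strategy A Player.one) (σ2 : Strategy A Player.two)
    (s0 : S) (l : List S) : ℝ :=
  if MC A σ1 σ2 s0 l then pathProb A l else 0

/-- The Borel probability measure on completed paths induced by the Markov chain
`M^{s0}_{σ1,σ2}`: the unique probability measure assigning to every basic cylinder
its weight. -/
def pathMeasure (A : Arena S) (σ1 : Strategy A Player.one) (σ2 : Strategy A Player.two)
    (s0 : S) : MeasureTheory.Measure (PathSpace S) :=
  if h : ∃ μ : MeasureTheory.Measure (PathSpace S), MeasureTheory.IsProbabilityMeasure μ ∧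
      ∀ l : List S, l ≠ [] → μ (cyl l) = ENNReal.ofReal (cylWeight A σ1 σ2 s0 l)
  then h.choose else 0

/-- The payoff function induced by a parity structure `(pri, R)`: a completed path
reaching a terminal state gets the reward `R` of (the first occurrence of) that
terminal state; an infinite path gets `1` if the greatest priority occurring
infinitely often along it is even, and `0` otherwise. -/
def payoff (A : Arena S) (pri : S → ℕ) (R : S → ℝ) (u : PathSpace S) : ℝ :=
  if h : ∃ i, A.E (u i) = ∅ then R (u (Nat.find h))
  else if Even (sSup {n | {i | pri (u i) = n}.Infinite}) then 1 else 0

/-- The expected reward of Player 1 for the Markov chain `M^{s0}_{σ1,σ2}`: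
the integral of the payoff against the induced probability measure on paths. -/
def expReward (A : Arena S) (pri : S → ℕ) (R : S → ℝ) (σ1 : Strategy A Player.one)
    (σ2 : Strategy A Player.two) (s0 : S) : ℝ :=
  ∫ u, payoff A pri R u ∂(pathMeasure A σ1 σ2 s0)

/-- The lower value `Val↓` of the 2½-player parity game `⟨A, Φ_(pri,R)⟩`. -/
def lowerValue (A : Arena S) (pri : S → ℕ) (R : S → ℝ) (s : S) : ℝ :=
  ⨆ σ1 : Strategy A Player.one, ⨅ σ2 : Strategy A Player.two, expReward A pri R σ1 σ2 s

/-- The upper value `Val↑` of the 2½-player parity game `⟨A, Φ_(pri,R)⟩`. -/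
def upperValue (A : Arena S) (pri : S → ℕ) (R : S → ℝ) (s : S) : ℝ :=
  ⨅ σ2 : Strategy A Player.two, ⨆ σ1 : Strategy A Player.one, expReward A pri R σ1 σ2 s

/-- The Bellman functional `𝓕` on `S → ℝ` associated to the game `⟨A, Φ_(pri,R)⟩`. -/
def bellman (A : Arena S) (R : S → ℝ) (f : S → ℝ) : S → ℝ := fun s =>
  if A.E s = ∅ then R s
  else match A.owner s with
    | Player.one => sSup (f '' A.E s)
    | Player.two => sInf (f '' A.E s)
    | Player.nature => ∑' t : A.E s, A.prob s t * f t
namespace pLmu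

variable {L P : Type}

/-- the number of connectives of a formula -/
def size : pLmu L → ℕ
  | .var _ => 1
  | .dia _ G => size G + 1
  | .box _ G => size G + 1
  | .or G H => size G + size H + 1
  | .and G H => size G + size H + 1
  | .mu _ G => size G + 1
  | .nu _ G => size G + 1

/-- `varInfo F d X` looks up the (leftmost outermost) binder binding `X` in `F`,
returning `some (d', b)` where `d'` is the depth (starting from `d`) at which the
binder occurs and `b` is `true` for a μ-binder and `false` for a ν-binder, and
`none` if `X` is not bound in `F`. -/
def varInfo : pLmu L → ℕ → ℕ → Option (ℕ × Bool)
  | .var _, _, _ => none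
  | .dia _ G, d, X => varInfo G (d+1) X
  | .box _ G, d, X => varInfo G (d+1) X
  | .or G H, d, X => (varInfo G (d+1) X).orElse (fun _ => varInfo H (d+1) X)
  | .and G H, d, X => (varInfo G (d+1) X).orElse (fun _ => varInfo H (d+1) X)
  | .mu Y G, d, X => if Y = X then some (d, true) else varInfo G (d+1) X
  | .nu Y G, d, X => if Y = X then some (d, false) else varInfo G (d+1) X

/-- `bodyOf F X` is the body of the (leftmost outermost) binder binding `X` in `F`,
if any. -/
def bodyOf : pLmu L → ℕ → Option (pLmu L)
  | .var _, _ => none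
  | .dia _ G, X => bodyOf G X
  | .box _ G, X => bodyOf G X
  | .or G H, X => (bodyOf G X).orElse (fun _ => bodyOf H X)
  | .and G H, X => (bodyOf G X).orElse (fun _ => bodyOf H X)
  | .mu Y G, X => if Y = X then some G else bodyOf G X
  | .nu Y G, X => if Y = X then some G else bodyOf G X

end pLmu

/-- The states of the game `𝒢^F_ρ`: pairs of a process state or a distribution on
process states, and a (sub)formula. -/
abbrev GState (L P : Type) : Type := (P ⊕ PDist P) × pLmu L

/-- The arena of the 2½-player parity game `𝒢^F_ρ` associated to a PLTS `M`
and a formula `F`. -/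
def gameArena (M : PLTS L P) (F : pLmu L) : Arena (GState L P) where
  E := fun s =>
    match s with
    | (Sum.inl p, .var X) =>
        match pLmu.bodyOf F X with
        | some H => {((Sum.inl p : P ⊕ PDist P), H)}
        | none => ∅
    | (Sum.inl p, .dia a G) => (fun d => ((Sum.inr d : P ⊕ PDist P), G)) '' M.trans a p
    | (Sum.inl p, .box a G) => (fun d => ((Sum.inr d : P ⊕ PDist P), G)) '' M.trans a p
    | (Sum.inl p, .or G H) => {((Sum.inl p : P ⊕ PDist P), G), ((Sum.inl p : P ⊕ PDist P), H)}
    | (Sum.inl p, .and G H) => {((Sum.inl p : P ⊕ PDist P), G), ((Sum.inl p : P ⊕ PDist P), H)}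
    | (Sum.inl p, .mu _ G) => {((Sum.inl p : P ⊕ PDist P), G)}
    | (Sum.inl p, .nu _ G) => {((Sum.inl p : P ⊕ PDist P), G)}
    | (Sum.inr d, G) => (fun q => ((Sum.inl q : P ⊕ PDist P), G)) '' Function.support d.f
  owner := fun s =>
    match s with
    | (Sum.inl _, .var X) =>
        match pLmu.varInfo F 0 X with
        | some (_, true) => Player.one
        | some (_, false) => Player.two
        | none => Player.one
    | (Sum.inl _, .dia _ _) => Player.one
    | (Sum.inl _, .box _ _) => Player.two
    | (Sum.inl _, .or _ _) => Player.one
    | (Sum.inl _, .and _ _) => Player.two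
    | (Sum.inl _, .mu _ _) => Player.one
    | (Sum.inl _, .nu _ _) => Player.two
    | (Sum.inr _, _) => Player.nature
  prob := fun s t =>
    match s, t with
    | (Sum.inr d, G), (Sum.inl q, G') => if G' = G then d.f q else 0
    | _, _ => 0

/-- The priority assignment of the game `𝒢^F_ρ`: a state `⟨p, X⟩` with `X` bound
in `F` at binder depth `d` gets the positive priority `2(|F| - d) + 1` if `X` is a
μ-variable and `2(|F| - d)` if `X` is a ν-variable (so that μ-variables get odd and
ν-variables get even priorities, and variables subsuming others get greater
priorities); all other states get priority `0`. -/
def gamePri (F : pLmu L) : GState L P → ℕ := fun s =>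
  match s with
  | (Sum.inl _, .var X) =>
      match pLmu.varInfo F 0 X with
      | some (d, true) => 2 * (F.size - d) + 1
      | some (d, false) => 2 * (F.size - d)
      | none => 0
  | _ => 0

/-- The terminal reward assignment of the game `𝒢^F_ρ`: a terminal state `⟨p, X⟩`
(with `X` free in `F`) gets reward `ρ(X)(p)`; a terminal state `⟨p, ⟨a⟩G⟩` gets
reward `0` and a terminal state `⟨p, [a]G⟩` gets reward `1`. -/
def gameR (F : pLmu L) (ρ : ℕ → P → unitInterval) : GState L P → ℝ := fun s =>
  match s with
  | (Sum.inl p, .var X) => (ρ X p : ℝ)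
  | (Sum.inl _, .dia _ _) => 0
  | (Sum.inl _, .box _ _) => 1
  | _ => 0

/-!
By Knaster–Tarski, `⟦νX.G⟧ρ` is the greatest `w` with `w ≤ ⟦G⟧ρ[w/X]`, and by hypothesis the
right-hand side is the value at `⟨·, G⟩` of the game for `G` under `ρ[w/X]`. That game differs from
the game for `νX.G` only in that a play stops with reward `w(q)` at `⟨q, X⟩`, whereas in the game
for `νX.G` it continues from `⟨q, G⟩`.

Upper bound: let `w(q)` be the upper value of the game for `νX.G` at `⟨q, G⟩`. Player 2 can play the
stopped game optimally up to `ε` and switch to a near-optimal continuation on the first visit to an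
`X`-state, so `w ≤ ⟦G⟧ρ[w/X]`, and therefore `w ≤ ⟦νX.G⟧ρ`.

Lower bound: let `w = ⟦νX.G⟧ρ`. Between the `k`-th and the next visit to an `X`-state Player 1 plays
the stopped game optimally up to `ε / 2 ^ (k + 1)`. By induction on `n` this guarantees `w - ε` for
the payoff raised to `1` on plays with at least `n` visits. As `n → ∞` these payoffs decrease to
the payoff of the game itself: `X` has the largest priority and that priority is even, so plays with
infinitely many visits pay `1`.
-/

open MeasureTheory
open scoped ENNReal

namespace PathSpace

/-- The path `x, u 0, u 1, …`. -/
def cons (x : S) (u : PathSpace S) : PathSpace S := fun n => Nat.casesOn n x u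

/-- The path without its first state. -/
def tail (u : PathSpace S) : PathSpace S := fun n => u (n + 1)

/-- The finite path formed by the first `n` states of a path. -/
def history (u : PathSpace S) (n : ℕ) : List S := List.ofFn fun i : Fin n => u i

@[simp] theorem cons_zero (x : S) (u : PathSpace S) : cons x u 0 = x := rfl

@[simp] theorem cons_succ (x : S) (u : PathSpace S) (n : ℕ) : cons x u (n + 1) = u n := rfl

@[simp] theorem tail_cons (x : S) (u : PathSpace S) : tail (cons x u) = u := rfl

@[simp] theorem length_history (u : PathSpace S) (n : ℕ) : (history u n).length = n := by
  simp [history]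

theorem getElem?_history (u : PathSpace S) {n i : ℕ} (hi : i < n) :
    (history u n)[i]? = some (u i) := by
  simp [history, hi]

theorem history_succ (u : PathSpace S) (n : ℕ) : history u (n + 1) = history u n ++ [u n] := by
  simp only [history, List.ofFn_succ_last, Fin.val_castSucc, Fin.val_last]

theorem mem_cyl_iff_history {l : List S} {u : PathSpace S} :
    u ∈ cyl l ↔ history u l.length = l := by
  conv_rhs => rhs; rw [← List.ofFn_get l]
  rw [history, List.ofFn_inj, funext_iff]
  rfl

@[simp] theorem cyl_nil : cyl ([] : List S) = Set.univ := by
  ext; simp [cyl]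

theorem mem_cyl_cons {x : S} {l : List S} {u : PathSpace S} :
    u ∈ cyl (x :: l) ↔ u 0 = x ∧ tail u ∈ cyl l := by
  simp only [cyl, Set.mem_ofPred_eq, List.length_cons, Fin.forall_fin_succ]
  rfl

theorem measurable_of_apply {Ω : Type} [MeasurableSpace Ω] {f : Ω → PathSpace S}
    (h : ∀ n (B : Set S), MeasurableSet {ω | f ω n ∈ B}) : Measurable f :=
  let _ : MeasurableSpace S := ⊤
  measurable_pi_iff.2 fun n B _ => h n B

theorem measurableSet_apply_mem (n : ℕ) (B : Set S) :
    MeasurableSet {u : PathSpace S | u n ∈ B} :=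
  let _ : MeasurableSpace S := ⊤
  (measurable_pi_apply (X := fun _ => S) n) MeasurableSpace.measurableSet_top

theorem measurable_cons (x : S) : Measurable (cons x) := by
  refine measurable_of_apply fun n B => ?_
  cases n with
  | zero => exact MeasurableSet.const (x ∈ B)
  | succ n => exact measurableSet_apply_mem n B

theorem measurableSet_cyl (l : List S) : MeasurableSet (cyl l) := by
  simp only [cyl, Set.ofPred_forall]
  exact MeasurableSet.iInter fun i => measurableSet_apply_mem _ {l.get i}

theorem measure_ext_of_forall_mem_finset {μ ν : Measure (PathSpace S)} [IsFiniteMeasure μ]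
    (h : ∀ (s : Finset ℕ) (B : ℕ → Set S),
      μ {u | ∀ i ∈ s, u i ∈ B i} = ν {u | ∀ i ∈ s, u i ∈ B i}) :
    μ = ν := by
  let _ : MeasurableSpace S := ⊤
  refine ext_of_generate_finite (α := PathSpace S)
    (squareCylinders fun _ : ℕ => {s : Set S | MeasurableSet s})
    (generateFrom_squareCylinders (α := fun _ : ℕ => S)).symm
    (isPiSystem_squareCylinders (fun _ => MeasurableSpace.isPiSystem_measurableSet) (by simp))
    ?_ (by simpa using h ∅ fun _ => ∅)
  rintro _ ⟨s, B, _, rfl⟩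
  exact h s B

theorem measurableSet_forall_mem_finset (s : Finset ℕ) (B : ℕ → Set S) :
    MeasurableSet {u : PathSpace S | ∀ i ∈ s, u i ∈ B i} := by
  simp only [Set.ofPred_forall]
  exact .biInter s.countable_toSet fun i _ => measurableSet_apply_mem i (B i)

end PathSpace

open PathSpace

section TrajectoryLaws

/-- The probability that a random sequence, whose next entry after the history `l` has law `D l`,
starts with the given list. -/
def cylProb (D : List S → PMF S) : List S → ℝ≥0∞
  | [] => 1
  | x :: l => D [] x * cylProb (fun l => D (x :: l)) l

/-- The law of the first `n` entries of a random sequence whose next entry after the history `l`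
has law `D l`. -/
def prefixLaw (D : List S → PMF S) : ℕ → PMF (List S)
  | 0 => PMF.pure []
  | n + 1 => (D []).bind fun x => (prefixLaw (fun l => D (x :: l)) n).map (x :: ·)

theorem prefixLaw_apply (D : List S → PMF S) (n : ℕ) (l : List S) :
    prefixLaw D n l = if l.length = n then cylProb D l else 0 := by
  induction n generalizing D l with
  | zero => cases l <;> simp [prefixLaw, cylProb]
  | succ n ih =>
    cases l with
    | nil => simp [prefixLaw, PMF.map_apply]
    | cons y l =>
      rw [prefixLaw, PMF.bind_apply, tsum_eq_single y fun x hx => by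
        simp [PMF.map_apply, hx.symm]]
      simp [PMF.map_apply, ih, cylProb]

theorem cylProb_append_singleton (D : List S → PMF S) (l : List S) (t : S) :
    cylProb D (l ++ [t]) = cylProb D l * D l t := by
  induction l generalizing D with
  | nil => simp [cylProb]
  | cons x l ih => simp [cylProb, ih, mul_assoc]

theorem cylProb_eq_prod (D : List S → PMF S) (l : List S) :
    cylProb D l = ∏ i : Fin l.length, D (l.take i) (l.get i) := by
  induction l generalizing D with
  | nil => simp [cylProb]
  | cons x l ih => simp [cylProb, ih, Fin.prod_univ_succ]

theorem countable_cylProb_ne_zero (D : List S → PMF S) : {l | cylProb D l ≠ 0}.Countable := by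
  refine (Set.countable_iUnion fun n => (prefixLaw D n).support_countable).mono fun l hl => ?_
  exact Set.mem_iUnion.2 ⟨l.length, by simpa [PMF.mem_support_iff, prefixLaw_apply] using hl⟩

theorem eq_toMeasure_of_le {α : Type*} [MeasurableSpace α] [MeasurableSingletonClass α]
    {p : PMF α} {μ : Measure α} [IsProbabilityMeasure μ] (h : ∀ a, p a ≤ μ {a}) :
    μ = p.toMeasure := by
  refine (Measure.eq_of_le_of_measure_univ_eq (Measure.le_iff.2 fun B hB => ?_) (by simp)).symm
  calc p.toMeasure B = ∑' a : B, p a := by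
        rw [PMF.toMeasure_apply _ hB, tsum_subtype]
    _ ≤ ∑' a : B, μ {↑a} := ENNReal.tsum_le_tsum fun a => h a
    _ ≤ μ (⋃ a : B, {↑a}) := tsum_meas_le_meas_iUnion_of_disjoint μ
        (fun a => measurableSet_singleton _) fun a b hab =>
          Set.disjoint_singleton.2 (Subtype.coe_ne_coe.2 hab)
    _ ≤ μ B := measure_mono (by simp)

-- Lower bounds suffice because the bounds at each length already add up to `1`.
theorem measure_history_mem {D : List S → PMF S} {μ : Measure (PathSpace S)}
    [IsProbabilityMeasure μ] (h : ∀ l, cylProb D l ≤ μ (cyl l)) {n : ℕ} {B : Set (List S)}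
    (hB : MeasurableSet {u : PathSpace S | history u n ∈ B}) :
    μ {u | history u n ∈ B} = (prefixLaw D n).toOuterMeasure B := by
  let _ : MeasurableSpace (List S) := MeasurableSpace.map (history · n) inferInstance
  have hm : Measurable fun u : PathSpace S => history u n := fun _ => id
  have fiber (l : List S) :
      {u : PathSpace S | history u n = l} = if l.length = n then cyl l else ∅ := by
    ext u
    split_ifs with hl
    · rw [mem_cyl_iff_history, hl, Set.mem_ofPred_eq]
    · simpa using fun hu => hl (by simp [← hu])
  have : MeasurableSingletonClass (List S) := ⟨fun l => by
    change MeasurableSet {u : PathSpace S | history u n = l}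
    rw [fiber]
    split_ifs
    exacts [measurableSet_cyl l, .empty]⟩
  have := Measure.isProbabilityMeasure_map (μ := μ) hm.aemeasurable
  rw [← PMF.toMeasure_apply_eq_toOuterMeasure_apply (prefixLaw D n) hB,
    ← eq_toMeasure_of_le (μ := μ.map (history · n)), Measure.map_apply hm hB]
  · rfl
  · intro l
    rw [Measure.map_apply hm (measurableSet_singleton l)]
    change _ ≤ μ {u | history u n = l}
    rw [fiber, prefixLaw_apply]
    split_ifs
    exacts [h l, zero_le]

theorem measure_cyl_of_le {D : List S → PMF S} {μ : Measure (PathSpace S)}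
    [IsProbabilityMeasure μ] (h : ∀ l, cylProb D l ≤ μ (cyl l)) (l : List S) :
    μ (cyl l) = cylProb D l := by
  have hl : cyl l = {u | history u l.length ∈ ({l} : Set (List S))} :=
    Set.ext fun _ => mem_cyl_iff_history
  have hm := measurableSet_cyl l
  rw [hl] at hm ⊢
  rw [measure_history_mem h hm, PMF.toOuterMeasure_apply_singleton, prefixLaw_apply, if_pos rfl]

theorem measure_ext_of_cyl {D : List S → PMF S} {μ ν : Measure (PathSpace S)}
    [IsProbabilityMeasure μ] [IsProbabilityMeasure ν] (hμ : ∀ l, μ (cyl l) = cylProb D l)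
    (hν : ∀ l, ν (cyl l) = cylProb D l) : μ = ν := by
  refine measure_ext_of_forall_mem_finset fun s B => ?_
  have hhistory : {u : PathSpace S | ∀ i ∈ s, u i ∈ B i} = {u | history u (s.sup id + 1) ∈
      {l : List S | ∀ i ∈ s, ∃ x ∈ B i, l[i]? = some x}} := by
    refine Set.ext fun (u : PathSpace S) => forall₂_congr fun i hi => ?_
    have : (history u (s.sup id + 1))[i]? = some (u i) :=
      getElem?_history u (Nat.lt_succ_of_le (Finset.le_sup (f := id) hi))
    simp only [this, Option.some.injEq, exists_eq_right']
  have hm := measurableSet_forall_mem_finset s B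
  rw [hhistory] at hm ⊢
  rw [measure_history_mem (fun l => (hμ l).ge) hm, measure_history_mem (fun l => (hν l).ge) hm]

end TrajectoryLaws

section TrajectoryMeasure

theorem cylProb_ne_zero_of_prefix {D : List S → PMF S} {l l' : List S} (hl : l <+: l')
    (h : cylProb D l' ≠ 0) : cylProb D l ≠ 0 := by
  obtain ⟨r, rfl⟩ := hl
  induction l generalizing D with
  | nil => simp [cylProb]
  | cons x l ih => exact mul_ne_zero (left_ne_zero_of_mul h) (ih (right_ne_zero_of_mul h))

/-- The path each of whose entries is chosen by `c` from the preceding entries. -/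
def generatedPath (c : List S → S) : PathSpace S := fun n =>
  c (List.ofFn fun i : Fin n => generatedPath c i)

theorem generatedPath_apply (c : List S → S) (n : ℕ) :
    generatedPath c n = c (history (generatedPath c) n) := by
  rw [generatedPath]; rfl

theorem generatedPath_mem_cyl {c : List S → S} {l : List S}
    (h : ∀ i : Fin l.length, c (l.take i) = l.get i) : generatedPath c ∈ cyl l := by
  have key (n : ℕ) (hn : n ≤ l.length) : history (generatedPath c) n = l.take n := by
    induction n with
    | zero => simp [history]
    | succ n ih =>
      rw [history_succ, generatedPath_apply, ih (by omega), h ⟨n, hn⟩]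
      simp
  rw [mem_cyl_iff_history, key _ le_rfl, List.take_length]

theorem measurable_generatedPath {Ω : Type} [MeasurableSpace Ω] {c : Ω → List S → S}
    (hc : ∀ l (B : Set S), MeasurableSet {ω | c ω l ∈ B})
    (hr : ∀ n, (Set.range fun ω => history (generatedPath (c ω)) n).Countable) :
    Measurable fun ω => generatedPath (c ω) := by
  have split (n : ℕ) (Q : Ω → List S → Prop) : {ω | Q ω (history (generatedPath (c ω)) n)} =
      ⋃ l ∈ Set.range fun ω => history (generatedPath (c ω)) n,
        {ω | history (generatedPath (c ω)) n = l} ∩ {ω | Q ω l} := by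
    ext ω
    simp only [Set.mem_ofPred_eq, Set.mem_iUnion, Set.mem_inter_iff, exists_prop]
    exact ⟨fun h => ⟨_, ⟨ω, rfl⟩, rfl, h⟩, fun ⟨_, _, hl, h⟩ => hl ▸ h⟩
  have meas (n : ℕ) : ∀ l, MeasurableSet {ω | history (generatedPath (c ω)) n = l} := by
    induction n with
    | zero => exact fun l => MeasurableSet.const ([] = l)
    | succ n ih =>
      intro l
      simp only [history_succ, generatedPath_apply]
      rw [split n fun ω l' => l' ++ [c ω l'] = l]
      exact .biUnion (hr n) fun l' _ => (ih l').inter (hc l' {x | l' ++ [x] = l})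
  refine measurable_of_apply fun n B => ?_
  simp only [generatedPath_apply]
  rw [split n fun ω l => c ω l ∈ B]
  exact .biUnion (hr n) fun l _ => (meas n l).inter (hc l B)

/-- The choice function that follows `ω` as long as the resulting history has positive probability,
and chooses `d` otherwise. This leaves only countably many histories of each length, without which
the dependence of the generated path on `ω` would not be measurable. -/
def positiveChoice (D : List S → PMF S) (d : S) (ω : List S → S) (l : List S) : S :=
  if cylProb D (l ++ [ω l]) ≠ 0 then ω l else d

theorem countable_history_positiveChoice (D : List S → PMF S) (d : S) (n : ℕ) :
    (Set.range fun ω => history (generatedPath (positiveChoice D d ω)) n).Countable := by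
  induction n with
  | zero => exact (Set.countable_singleton []).mono (Set.range_subset_iff.2 fun ω => rfl)
  | succ n ih =>
    refine ((countable_cylProb_ne_zero D).union (ih.image (· ++ [d]))).mono ?_
    rintro _ ⟨ω, rfl⟩
    simp only [history_succ, generatedPath_apply]
    by_cases h : cylProb D (history (generatedPath (positiveChoice D d ω)) n ++
        [ω (history (generatedPath (positiveChoice D d ω)) n)]) ≠ 0
    · exact .inl (by rwa [positiveChoice, if_pos h])
    · exact .inr ⟨_, ⟨ω, rfl⟩, by rw [positiveChoice, if_neg h]⟩

theorem infinitePi_apply_take_eq [MeasurableSpace S] [MeasurableSingletonClass S]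
    (D : List S → PMF S) (l : List S) :
    Measure.infinitePi (fun l => (D l).toMeasure)
      {ω | ∀ i : Fin l.length, ω (l.take i) = l.get i} = cylProb D l := by
  have hinj : Function.Injective fun i : Fin l.length => l.take i := fun i j hij => by
    simpa [Fin.ext_iff] using congrArg List.length hij
  obtain ⟨d, -⟩ := (D []).support_nonempty
  have hset : {ω : List S → S | ∀ i : Fin l.length, ω (l.take i) = l.get i} =
      Set.pi (Finset.univ.image fun i : Fin l.length => l.take i)
        fun l' => {l.getD l'.length d} := by
    ext ω
    simp
  rw [hset, Measure.infinitePi_pi _ fun _ _ => measurableSet_singleton _,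
    Finset.prod_image hinj.injOn, cylProb_eq_prod]
  simp [PMF.toMeasure_apply_singleton]

-- The choices after all histories are drawn independently, and the path follows them.
theorem exists_measure_cyl_eq (D : List S → PMF S) :
    ∃ μ : Measure (PathSpace S), IsProbabilityMeasure μ ∧ ∀ l, μ (cyl l) = cylProb D l := by
  let _ : MeasurableSpace S := ⊤
  obtain ⟨d, -⟩ := (D []).support_nonempty
  have hm : Measurable fun ω => generatedPath (positiveChoice D d ω) :=
    measurable_generatedPath (fun l B => measurable_pi_apply (X := fun _ => S) l
      (MeasurableSpace.measurableSet_top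
        (s := {x | (if cylProb D (l ++ [x]) ≠ 0 then x else d) ∈ B})))
      (countable_history_positiveChoice D d)
  let P := Measure.infinitePi fun l => (D l).toMeasure
  have hP := Measure.isProbabilityMeasure_map (μ := P) hm.aemeasurable
  refine ⟨_, hP, measure_cyl_of_le fun l => ?_⟩
  by_cases hl : cylProb D l = 0
  · exact hl ▸ zero_le
  rw [Measure.map_apply hm (measurableSet_cyl l), ← infinitePi_apply_take_eq]
  refine measure_mono fun ω hω => generatedPath_mem_cyl fun i => ?_
  have : l.take i ++ [l.get i] = l.take (i + 1) := by simp
  rw [positiveChoice, hω i, this,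
    if_pos (cylProb_ne_zero_of_prefix (List.take_prefix _ _) hl)]

/-- The law of the random path whose next state after the history `l` has law `D l`. -/
def trajMeasure (D : List S → PMF S) : Measure (PathSpace S) := (exists_measure_cyl_eq D).choose

instance (D : List S → PMF S) : IsProbabilityMeasure (trajMeasure D) :=
  (exists_measure_cyl_eq D).choose_spec.1

theorem trajMeasure_cyl (D : List S → PMF S) (l : List S) :
    trajMeasure D (cyl l) = cylProb D l :=
  (exists_measure_cyl_eq D).choose_spec.2 l

theorem eq_trajMeasure {D : List S → PMF S} {μ : Measure (PathSpace S)} [IsProbabilityMeasure μ]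
    (h : ∀ l, μ (cyl l) = cylProb D l) : μ = trajMeasure D :=
  measure_ext_of_cyl h (trajMeasure_cyl D)

theorem trajMeasure_eq_sum (D : List S → PMF S) :
    trajMeasure D =
      Measure.sum fun x => D [] x • (trajMeasure fun l => D (x :: l)).map (cons x) := by
  symm
  have happly {B : Set (PathSpace S)} (hB : MeasurableSet B) :
      Measure.sum (fun x => D [] x • (trajMeasure fun l => D (x :: l)).map (cons x)) B =
        ∑' x, D [] x * trajMeasure (fun l => D (x :: l)) (cons x ⁻¹' B) := by
    simp only [Measure.sum_apply _ hB, Measure.smul_apply, smul_eq_mul,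
      Measure.map_apply (measurable_cons _) hB]
  have : IsProbabilityMeasure
      (Measure.sum fun x => D [] x • (trajMeasure fun l => D (x :: l)).map (cons x)) :=
    ⟨by simp [happly .univ, PMF.tsum_coe]⟩
  refine eq_trajMeasure fun l => ?_
  cases l with
  | nil => simp [cylProb]
  | cons x l =>
    have hpre (y : S) : cons y ⁻¹' cyl (x :: l) = if y = x then cyl l else ∅ := by
      ext u
      split_ifs with h <;> simp [mem_cyl_cons, h]
    rw [happly (measurableSet_cyl _), tsum_eq_single x fun y hy => by simp [hpre, hy], hpre,
      if_pos rfl, trajMeasure_cyl, cylProb]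

theorem trajMeasure_apply (D : List S → PMF S) {B : Set (PathSpace S)} (hB : MeasurableSet B) :
    trajMeasure D B = ∑' x, D [] x * trajMeasure (fun l => D (x :: l)) (cons x ⁻¹' B) := by
  rw [trajMeasure_eq_sum D, Measure.sum_apply _ hB]
  simp only [Measure.smul_apply, smul_eq_mul, Measure.map_apply (measurable_cons _) hB]

theorem lintegral_trajMeasure (D : List S → PMF S) {f : PathSpace S → ℝ≥0∞} (hf : Measurable f) :
    ∫⁻ u, f u ∂(trajMeasure D) =
      ∑' x, D [] x * ∫⁻ u, f (cons x u) ∂(trajMeasure fun l => D (x :: l)) := by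
  rw [trajMeasure_eq_sum D, lintegral_sum_measure]
  simp only [lintegral_smul_measure, lintegral_map hf (measurable_cons _), smul_eq_mul]

theorem trajMeasure_eq_map_of_pure {D : List S → PMF S} {s : S} (h : D [] = PMF.pure s) :
    trajMeasure D = (trajMeasure fun l => D (s :: l)).map (cons s) := by
  refine Measure.ext_of_lintegral _ fun f hf => ?_
  rw [lintegral_trajMeasure D hf, lintegral_map hf (measurable_cons s),
    tsum_eq_single s fun x hx => by simp [h, hx]]
  simp [h]

end TrajectoryMeasure

section Hitting

theorem measurableSet_forall_mem (B : ℕ → Set S) :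
    MeasurableSet {u : PathSpace S | ∀ n, u n ∈ B n} := by
  simp only [Set.ofPred_forall]
  exact .iInter fun n => measurableSet_apply_mem n (B n)

theorem measurableSet_forall_lt_mem (B : ℕ → Set S) (n : ℕ) :
    MeasurableSet {u : PathSpace S | ∀ i < n, u i ∈ B i} := by
  simp only [Set.ofPred_forall]
  exact .iInter fun i => .iInter fun _ => measurableSet_apply_mem i (B i)

theorem trajMeasure_forall_lt_mem_congr {T : Set S} {D D' : List S → PMF S}
    (hD : ∀ h : List S, (∀ x ∈ h, x ∉ T) → D h = D' h) {B : ℕ → Set S} (hB : ∀ i, B i ⊆ Tᶜ)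
    (n : ℕ) :
    trajMeasure D {u | ∀ i < n, u i ∈ B i} = trajMeasure D' {u | ∀ i < n, u i ∈ B i} := by
  induction n generalizing D D' B with
  | zero => simp
  | succ n ih =>
    rw [trajMeasure_apply D (measurableSet_forall_lt_mem B _),
      trajMeasure_apply D' (measurableSet_forall_lt_mem B _), hD [] (by simp)]
    refine tsum_congr fun x => ?_
    by_cases hx : x ∈ B 0
    · have hpre : cons x ⁻¹' {u : PathSpace S | ∀ i < n + 1, u i ∈ B i} =
          {u | ∀ i < n, u i ∈ B (i + 1)} := by
        ext u
        simp only [Set.mem_preimage, Set.mem_ofPred_eq, Nat.forall_lt_succ_left, cons_zero, hx,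
          cons_succ, true_and]
      rw [hpre, ih (D' := fun l => D' (x :: l)) (fun h hh => hD _ (by simpa using ⟨hB 0 hx, hh⟩))
        fun i => hB (i + 1)]
    · have hpre : cons x ⁻¹' {u : PathSpace S | ∀ i < n + 1, u i ∈ B i} = ∅ := by
        ext u
        simp only [Set.mem_preimage, Set.mem_ofPred_eq, Nat.forall_lt_succ_left, cons_zero, hx,
          false_and, Set.mem_empty_iff_false]
      simp only [hpre, measure_empty]

theorem trajMeasure_forall_mem_congr {T : Set S} {D D' : List S → PMF S}
    (hD : ∀ h : List S, (∀ x ∈ h, x ∉ T) → D h = D' h) {B : ℕ → Set S} (hB : ∀ i, B i ⊆ Tᶜ) :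
    trajMeasure D {u | ∀ i, u i ∈ B i} = trajMeasure D' {u | ∀ i, u i ∈ B i} := by
  have hInter : {u : PathSpace S | ∀ i, u i ∈ B i} = ⋂ n, {u | ∀ i < n, u i ∈ B i} := by
    ext u
    simp only [Set.mem_ofPred_eq, Set.mem_iInter]
    exact ⟨fun h n i _ => h i, fun h i => h (i + 1) i i.lt_succ_self⟩
  have hlim (D : List S → PMF S) := tendsto_measure_iInter_atTop (μ := trajMeasure D)
    (fun n => (measurableSet_forall_lt_mem B n).nullMeasurableSet)
    (fun m n hmn u hu i hi => hu i (lt_of_lt_of_le hi hmn)) ⟨0, measure_ne_top _ _⟩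
  rw [hInter]
  refine tendsto_nhds_unique (hlim D) ((hlim D').congr fun n => ?_)
  exact (trajMeasure_forall_lt_mem_congr hD hB n).symm

theorem restrict_trajMeasure_congr {T : Set S} {D D' : List S → PMF S}
    (hD : ∀ h : List S, (∀ x ∈ h, x ∉ T) → D h = D' h) :
    (trajMeasure D).restrict {u | ∀ n, u n ∉ T} = (trajMeasure D').restrict {u | ∀ n, u n ∉ T} := by
  refine measure_ext_of_forall_mem_finset fun s B => ?_
  have hinter : {u : PathSpace S | ∀ i ∈ s, u i ∈ B i} ∩ {u | ∀ n, u n ∉ T} =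
      {u | ∀ i, u i ∈ (if i ∈ s then B i else Set.univ) \ T} := by
    rw [← Set.ofPred_and]
    exact Set.ext fun u => forall_and.symm.trans <| forall_congr' fun i => by
      by_cases hi : i ∈ s <;> simp [hi]
  have hB := measurableSet_forall_mem_finset s B
  rw [Measure.restrict_apply hB, Measure.restrict_apply hB, hinter,
    trajMeasure_forall_mem_congr hD fun i => Set.sdiff_subset_compl _ _]

/-- The event that the path visits `T` for the first time at time `n`. -/
def firstVisitAt (T : Set S) (n : ℕ) : Set (PathSpace S) := {u | (∀ m < n, u m ∉ T) ∧ u n ∈ T}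

theorem measurableSet_firstVisitAt (T : Set S) (n : ℕ) : MeasurableSet (firstVisitAt T n) :=
  (measurableSet_forall_lt_mem (fun _ => Tᶜ) n).inter (measurableSet_apply_mem n T)

theorem cons_mem_firstVisitAt_succ {T : Set S} {n : ℕ} {x : S} {u : PathSpace S} :
    cons x u ∈ firstVisitAt T (n + 1) ↔ x ∉ T ∧ u ∈ firstVisitAt T n := by
  simp only [firstVisitAt, Set.mem_ofPred_eq, Nat.forall_lt_succ_left, cons_zero, cons_succ,
    and_assoc]

theorem pairwise_disjoint_firstVisitAt (T : Set S) :
    Pairwise (Function.onFun Disjoint (firstVisitAt T)) := by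
  intro m n hmn
  refine Set.disjoint_left.2 fun u hm hn => ?_
  rcases lt_or_gt_of_ne hmn with h | h
  exacts [hn.1 m h hm.2, hm.1 n h hn.2]

theorem compl_iUnion_firstVisitAt (T : Set S) :
    (⋃ n, firstVisitAt T n)ᶜ = {u | ∀ n, u n ∉ T} := by
  ext u
  simp only [Set.mem_compl_iff, Set.mem_iUnion, not_exists, Set.mem_ofPred_eq]
  refine ⟨fun h n => ?_, fun h n hn => h n hn.2⟩
  induction n using Nat.strong_induction_on with
  | _ n ih => exact fun hn => h n ⟨ih, hn⟩

/-- `f` does not depend on the states of the path preceding its first visit to `T`. Dropping a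
state of `E` has to leave `f` unchanged only on paths that repeat it: in the application `E` is the
set of terminal states, which are repeated forever. -/
def PrefixInvariant (T E : Set S) (f : PathSpace S → ℝ≥0∞) : Prop :=
  ∀ s ∉ T, ∀ u : PathSpace S, (s ∈ E → u 0 = s) → f (cons s u) = f u

theorem ae_apply_zero_eq {D : List S → PMF S} {s : S} (h : D [] = PMF.pure s) :
    ∀ᵐ u ∂(trajMeasure D), u 0 = s := by
  rw [trajMeasure_eq_map_of_pure h]
  exact (ae_map_iff (measurable_cons s).aemeasurable (measurableSet_apply_mem 0 {s})).2 (by simp)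

theorem PrefixInvariant.lintegral_firstVisitAt_succ {T E : Set S} {f : PathSpace S → ℝ≥0∞}
    (hf : PrefixInvariant T E f) {D : List S → PMF S} {x : S} (hx : x ∉ T)
    (hE : x ∈ E → D [x] = PMF.pure x) (n : ℕ) :
    ∫⁻ u, (firstVisitAt T (n + 1)).indicator f (cons x u) ∂(trajMeasure fun l => D (x :: l)) =
      ∫⁻ u, (firstVisitAt T n).indicator f u ∂(trajMeasure fun l => D (x :: l)) := by
  have hae : ∀ᵐ u ∂(trajMeasure fun l => D (x :: l)), x ∈ E → u 0 = x := by
    by_cases hxE : x ∈ E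
    · filter_upwards [ae_apply_zero_eq (D := fun l => D (x :: l)) (hE hxE)] with u hu _ using hu
    · exact .of_forall fun u hu => absurd hu hxE
  refine lintegral_congr_ae (hae.mono fun u hu => ?_)
  simp only [Set.indicator_apply, cons_mem_firstVisitAt_succ, hx, not_false_eq_true, true_and,
    hf x hx u hu]

theorem lintegral_firstVisitAt_le {T E : Set S} {f f' : PathSpace S → ℝ≥0∞}
    (mf : Measurable f) (mf' : Measurable f') (hf : PrefixInvariant T E f)
    (hf' : PrefixInvariant T E f') {D D' : List S → PMF S}
    (hD : ∀ h : List S, (∀ x ∈ h, x ∉ T) → D h = D' h)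
    (hE : ∀ h : List S, ∀ s ∈ E, D (h ++ [s]) = PMF.pure s)
    (hT : ∀ h : List S, (∀ x ∈ h, x ∉ T) → ∀ t ∈ T,
      ∫⁻ u, f (cons t u) ∂(trajMeasure fun l => D (h ++ t :: l)) ≤
        ∫⁻ u, f' (cons t u) ∂(trajMeasure fun l => D' (h ++ t :: l)))
    (n : ℕ) :
    ∫⁻ u, (firstVisitAt T n).indicator f u ∂(trajMeasure D) ≤
      ∫⁻ u, (firstVisitAt T n).indicator f' u ∂(trajMeasure D') := by
  induction n generalizing D D' with
  | zero =>
    rw [lintegral_trajMeasure D (mf.indicator (measurableSet_firstVisitAt T 0)),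
      lintegral_trajMeasure D' (mf'.indicator (measurableSet_firstVisitAt T 0)), hD [] (by simp)]
    refine ENNReal.tsum_le_tsum fun x => mul_le_mul_right ?_ _
    by_cases hx : x ∈ T
    · simpa [Set.indicator_apply, firstVisitAt, hx] using hT [] (by simp) x hx
    · simp [firstVisitAt, hx]
  | succ n ih =>
    rw [lintegral_trajMeasure D (mf.indicator (measurableSet_firstVisitAt T _)),
      lintegral_trajMeasure D' (mf'.indicator (measurableSet_firstVisitAt T _)), hD [] (by simp)]
    refine ENNReal.tsum_le_tsum fun x => mul_le_mul_right ?_ _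
    by_cases hx : x ∈ T
    · simp [cons_mem_firstVisitAt_succ, hx]
    · have hD₁ (h : List S) (hh : ∀ y ∈ h, y ∉ T) : ∀ y ∈ x :: h, y ∉ T := by
        simpa using ⟨hx, hh⟩
      have hxE' (hxE : x ∈ E) : D' [x] = PMF.pure x := by
        rw [← hD [x] (by simpa using hx)]
        exact hE [] x hxE
      rw [hf.lintegral_firstVisitAt_succ hx (hE [] x), hf'.lintegral_firstVisitAt_succ hx hxE']
      exact ih (fun h hh => hD _ (hD₁ h hh)) (fun h => hE (x :: h))
        fun h hh => hT (x :: h) (hD₁ h hh)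

theorem lintegral_trajMeasure_le_of_firstVisit {T E : Set S} {f f' : PathSpace S → ℝ≥0∞}
    (mf : Measurable f) (mf' : Measurable f') (hf : PrefixInvariant T E f)
    (hf' : PrefixInvariant T E f') {D D' : List S → PMF S}
    (hD : ∀ h : List S, (∀ x ∈ h, x ∉ T) → D h = D' h)
    (hE : ∀ h : List S, ∀ s ∈ E, D (h ++ [s]) = PMF.pure s)
    (hT : ∀ h : List S, (∀ x ∈ h, x ∉ T) → ∀ t ∈ T,
      ∫⁻ u, f (cons t u) ∂(trajMeasure fun l => D (h ++ t :: l)) ≤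
        ∫⁻ u, f' (cons t u) ∂(trajMeasure fun l => D' (h ++ t :: l)))
    (hmiss : ∀ u : PathSpace S, (∀ n, u n ∉ T) → f u ≤ f' u) :
    ∫⁻ u, f u ∂(trajMeasure D) ≤ ∫⁻ u, f' u ∂(trajMeasure D') := by
  have hmeas : MeasurableSet (⋃ n, firstVisitAt T n) := .iUnion (measurableSet_firstVisitAt T)
  rw [← lintegral_add_compl f hmeas, ← lintegral_add_compl f' hmeas,
    lintegral_iUnion (measurableSet_firstVisitAt T) (pairwise_disjoint_firstVisitAt T),
    lintegral_iUnion (measurableSet_firstVisitAt T) (pairwise_disjoint_firstVisitAt T),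
    compl_iUnion_firstVisitAt, restrict_trajMeasure_congr hD]
  simp only [← lintegral_indicator (measurableSet_firstVisitAt T _)]
  exact add_le_add
    (ENNReal.tsum_le_tsum fun n => lintegral_firstVisitAt_le mf mf' hf hf' hD hE hT n)
    (setLIntegral_mono' (measurableSet_forall_mem fun _ => Tᶜ) fun u hu => hmiss u hu)

end Hitting

section Payoff

theorem payoff_of_first_terminal {A : Arena S} {pri : S → ℕ} {R : S → ℝ} {u : PathSpace S} {n : ℕ}
    (h : A.E (u n) = ∅) (hlt : ∀ m < n, A.E (u m) ≠ ∅) : payoff A pri R u = R (u n) := by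
  have hex : ∃ i, A.E (u i) = ∅ := ⟨n, h⟩
  rw [payoff, dif_pos hex, (Nat.find_eq_iff hex).2 ⟨h, hlt⟩]

theorem payoff_of_infinite {A : Arena S} {pri : S → ℕ} {R : S → ℝ} {u : PathSpace S}
    (h : ∀ n, A.E (u n) ≠ ∅) :
    payoff A pri R u = if Even (sSup {n | {i | pri (u i) = n}.Infinite}) then 1 else 0 := by
  rw [payoff, dif_neg (not_exists.2 h)]

theorem payoff_mem_Icc (A : Arena S) (pri : S → ℕ) {R : S → ℝ} (hR : ∀ s, R s ∈ Set.Icc 0 1)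
    (u : PathSpace S) : payoff A pri R u ∈ Set.Icc 0 1 := by
  rw [payoff]
  split_ifs
  exacts [hR _, by simp, by simp]

theorem infinite_setOf_cons_eq_iff (g : S → ℕ) (s : S) (u : PathSpace S) (n : ℕ) :
    {i | g (cons s u i) = n}.Infinite ↔ {i | g (u i) = n}.Infinite := by
  simp only [← Nat.frequently_atTop_iff_infinite]
  conv_lhs => rw [← Filter.map_add_atTop_eq_nat 1]
  exact Filter.frequently_map

theorem payoff_cons {A : Arena S} (pri : S → ℕ) (R : S → ℝ) {s : S} {u : PathSpace S}
    (h : A.E s = ∅ → u 0 = s) : payoff A pri R (cons s u) = payoff A pri R u := by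
  by_cases hs : A.E s = ∅
  · rw [payoff_of_first_terminal (u := cons s u) (n := 0) hs (by simp),
      payoff_of_first_terminal (u := u) (n := 0) (by rwa [h hs]) (by simp), h hs, cons_zero]
  have hcons {p : ℕ → Prop} (hp : ∀ m, p m → A.E (u m) ≠ ∅) :
      ∀ m, (∀ k, m = k + 1 → p k) → A.E (cons s u m) ≠ ∅
    | 0, _ => hs
    | m + 1, hm => hp m (hm m rfl)
  by_cases hex : ∃ n, A.E (u n) = ∅
  · have hlt : ∀ m < Nat.find hex, A.E (u m) ≠ ∅ := fun m => Nat.find_min hex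
    rw [payoff_of_first_terminal (Nat.find_spec hex) hlt,
      payoff_of_first_terminal (u := cons s u) (n := Nat.find hex + 1) (Nat.find_spec hex)
        fun m hm => hcons hlt m fun k hk => by omega, cons_succ]
  · rw [payoff_of_infinite (u := u) (not_exists.1 hex),
      payoff_of_infinite (u := cons s u) fun m => hcons (p := fun _ => True)
        (fun m _ => not_exists.1 hex m) m fun _ _ => trivial]
    simp only [infinite_setOf_cons_eq_iff]

theorem payoff_congr {A B : Arena S} {pri pri' : S → ℕ} {R R' : S → ℝ} {u : PathSpace S}
    (hE : ∀ n, A.E (u n) = B.E (u n)) (hpri : ∀ n, pri (u n) = pri' (u n))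
    (hR : ∀ n, R (u n) = R' (u n)) : payoff A pri R u = payoff B pri' R' u := by
  simp only [payoff, hE, hpri, hR]

theorem measurable_apply (n : ℕ) {β : Type*} [MeasurableSpace β] (g : S → β) :
    Measurable fun u : PathSpace S => g (u n) :=
  fun B _ => measurableSet_apply_mem n (g ⁻¹' B)

theorem measurable_sSup_nat {Ω : Type*} [MeasurableSpace Ω] {p : ℕ → Ω → Prop}
    (hp : ∀ n, MeasurableSet {ω | p n ω}) : Measurable fun ω => sSup {n | p n ω} := by
  have hbound (m : ℕ) : MeasurableSet {ω | ∀ n ∈ {n | p n ω}, n ≤ m} := by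
    simp only [Set.mem_ofPred_eq, Set.ofPred_forall]
    exact .iInter fun n => (hp n).imp (.const _)
  refine Measurable.dite (s := {ω | ∃ m, ∀ n ∈ {n | p n ω}, n ≤ m})
    (f := fun ω => Nat.find ω.2) (g := fun _ => 0) ?_ measurable_const ?_
  · exact measurable_find (fun ω => ω.2) fun m => measurable_subtype_coe (hbound m)
  · simp only [Set.ofPred_exists]
    exact .iUnion hbound

theorem measurable_payoff (A : Arena S) (pri : S → ℕ) (R : S → ℝ) :
    Measurable (payoff A pri R) := by
  have hterm (n : ℕ) : MeasurableSet {u : PathSpace S | A.E (u n) = ∅} :=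
    measurableSet_apply_mem n {s | A.E s = ∅}
  have hinf (n : ℕ) : MeasurableSet {u : PathSpace S | {i | pri (u i) = n}.Infinite} := by
    simp only [← Nat.frequently_atTop_iff_infinite, Filter.frequently_atTop, Set.ofPred_forall,
      Set.ofPred_exists, Set.ofPred_and]
    exact .iInter fun a => .iUnion fun b =>
      (MeasurableSet.const _).inter (measurableSet_apply_mem b {s | pri s = n})
  refine Measurable.dite (s := {u : PathSpace S | ∃ i, A.E (u i) = ∅})
    (f := fun u => R (u.1 (Nat.find u.2)))
    (g := fun u => if Even (sSup {n | {i | pri (u.1 i) = n}.Infinite}) then 1 else 0) ?_ ?_ ?_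
  · exact Measurable.find (f := fun n (u : {u : PathSpace S | ∃ i, A.E (u i) = ∅}) => R (u.1 n))
      (fun n => (measurable_apply n R).comp measurable_subtype_coe)
      (fun n => measurable_subtype_coe (hterm n)) fun u => u.2
  · refine Measurable.comp (g := fun u : PathSpace S =>
      if Even (sSup {n | {i | pri (u i) = n}.Infinite}) then (1 : ℝ) else 0) ?_
      measurable_subtype_coe
    exact Measurable.ite (measurable_sSup_nat hinf (.of_discrete (s := {n | Even n})))
      measurable_const measurable_const
  · simp only [Set.ofPred_exists]
    exact .iUnion hterm

end Payoff

section PlayLaw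

/-- The law of the successor chosen by Nature at `s`; the point mass at `s` if `A.prob s` is not a
probability distribution. -/
def natureLaw (A : Arena S) (s : S) : PMF S :=
  if h : HasSum (fun t => ENNReal.ofReal (A.prob s t)) 1 then ⟨_, h⟩ else PMF.pure s

/-- The law of the state following `s` after the history `h`; terminal states are repeated. -/
def stepLaw (A : Arena S) (σ₁ : Strategy A .one) (σ₂ : Strategy A .two) (h : List S) (s : S) :
    PMF S :=
  if A.E s = ∅ then PMF.pure s else
    match A.owner s with
    | .one => PMF.pure (σ₁.next h s)
    | .two => PMF.pure (σ₂.next h s)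
    | .nature => natureLaw A s

/-- The law of the next state of a play from `s₀`, given the states visited so far. -/
def playLaw (A : Arena S) (σ₁ : Strategy A .one) (σ₂ : Strategy A .two) (s₀ : S) (l : List S) :
    PMF S :=
  l.getLast?.elim (PMF.pure s₀) (stepLaw A σ₁ σ₂ l.dropLast)

/-- `t` may follow `s` after the history `h` in the Markov chain of a strategy profile. -/
def IsStep (A : Arena S) (σ₁ : Strategy A .one) (σ₂ : Strategy A .two) (h : List S) (s t : S) :
    Prop :=
  (A.owner s = .one ∧ A.E s ≠ ∅ ∧ t = σ₁.next h s) ∨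
  (A.owner s = .two ∧ A.E s ≠ ∅ ∧ t = σ₂.next h s) ∨
  (A.owner s = .nature ∧ t ∈ A.E s) ∨ (A.E s = ∅ ∧ t = s)

variable {A : Arena S}

theorem natureLaw_apply {s : S} (h₀ : ∀ t, 0 ≤ A.prob s t) (h₁ : HasSum (A.prob s) 1) (t : S) :
    natureLaw A s t = ENNReal.ofReal (A.prob s t) := by
  have hsum : HasSum (fun t => ENNReal.ofReal (A.prob s t)) 1 := by
    rw [ENNReal.summable.hasSum_iff, ← ENNReal.ofReal_tsum_of_nonneg h₀ h₁.summable, h₁.tsum_eq,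
      ENNReal.ofReal_one]
  have h : natureLaw A s = (⟨_, hsum⟩ : PMF S) := dif_pos hsum
  rw [h]
  rfl

theorem Arena.Wellformed.E_ne_empty (hA : A.Wellformed) {s : S} (hs : A.owner s = .nature) :
    A.E s ≠ ∅ := by
  obtain ⟨_, h₁, h₂⟩ := hA s hs
  rw [h₂, Ne, Function.support_eq_empty_iff]
  intro h
  exact zero_ne_one (hasSum_zero.unique (h ▸ h₁))

theorem stepProb_nonneg (hA : A.Wellformed) (s t : S) : 0 ≤ stepProb A s t := by
  rw [stepProb]
  split_ifs with h
  exacts [(hA s h).1 t, zero_le_one]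

theorem pathProb_append_pair (l : List S) (s t : S) :
    pathProb A (l ++ [s, t]) = pathProb A (l ++ [s]) * stepProb A s t := by
  induction l using pathProb.induct with
  | case1 => simp [pathProb]
  | case2 x => simp [pathProb]
  | case3 x y l ih => simpa [pathProb, mul_assoc] using Or.inl ih

variable (σ₁ : Strategy A .one) (σ₂ : Strategy A .two) (s₀ : S)

theorem playLaw_nil : playLaw A σ₁ σ₂ s₀ [] = PMF.pure s₀ := rfl

theorem playLaw_append_singleton (h : List S) (s : S) :
    playLaw A σ₁ σ₂ s₀ (h ++ [s]) = stepLaw A σ₁ σ₂ h s := by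
  simp [playLaw]

theorem MC_append_pair_iff (h : List S) (s t : S) :
    MC A σ₁ σ₂ s₀ (h ++ [s, t]) ↔ MC A σ₁ σ₂ s₀ (h ++ [s]) ∧ IsStep A σ₁ σ₂ h s t := by
  constructor
  · intro hmc
    generalize hl : h ++ [s, t] = l at hmc
    have inj {h' : List S} {s' t' : S} (he : h ++ [s, t] = h' ++ [s', t']) :
        h = h' ∧ s = s' ∧ t = t' := by
      simpa using List.append_inj' he rfl
    cases hmc with
    | root => simpa using congrArg List.length hl
    | one h' s' hmc ho hE =>
      obtain ⟨rfl, rfl, rfl⟩ := inj hl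
      exact ⟨hmc, .inl ⟨ho, hE, rfl⟩⟩
    | two h' s' hmc ho hE =>
      obtain ⟨rfl, rfl, rfl⟩ := inj hl
      exact ⟨hmc, .inr (.inl ⟨ho, hE, rfl⟩)⟩
    | nature h' s' t' hmc ho ht =>
      obtain ⟨rfl, rfl, rfl⟩ := inj hl
      exact ⟨hmc, .inr (.inr (.inl ⟨ho, ht⟩))⟩
    | term h' s' hmc hE =>
      obtain ⟨rfl, rfl, rfl⟩ := inj hl
      exact ⟨hmc, .inr (.inr (.inr ⟨hE, rfl⟩))⟩
  · rintro ⟨hmc, ⟨ho, hE, rfl⟩ | ⟨ho, hE, rfl⟩ | ⟨ho, ht⟩ | ⟨hE, rfl⟩⟩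
    exacts [.one h s hmc ho hE, .two h s hmc ho hE, .nature h s t hmc ho ht, .term h t hmc hE]

theorem MC_singleton_iff (s : S) : MC A σ₁ σ₂ s₀ [s] ↔ s = s₀ := by
  refine ⟨fun hmc => ?_, fun h => h ▸ .root⟩
  generalize hl : [s] = l at hmc
  cases hmc with
  | root => exact List.singleton_injective hl
  | _ => simpa using congrArg List.length hl

theorem stepLaw_apply (hA : A.Wellformed) (h : List S) (s t : S) :
    stepLaw A σ₁ σ₂ h s t =
      if IsStep A σ₁ σ₂ h s t then ENNReal.ofReal (stepProb A s t) else 0 := by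
  by_cases hE : A.E s = ∅
  · have hn : A.owner s ≠ .nature := fun ho => hA.E_ne_empty ho hE
    simp [stepLaw, hE, IsStep, stepProb, hn]
  cases ho : A.owner s with
  | one => simp [stepLaw, hE, IsStep, stepProb, ho]
  | two => simp [stepLaw, hE, IsStep, stepProb, ho]
  | nature =>
    obtain ⟨h₀, h₁, h₂⟩ := hA s ho
    have hout (ht : t ∉ A.E s) : A.prob s t = 0 := by simpa [h₂] using ht
    by_cases ht : t ∈ A.E s <;>
      simp [stepLaw, hE, IsStep, stepProb, ho, natureLaw_apply h₀ h₁, ht, hout]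

theorem ofReal_cylWeight (hA : A.Wellformed) (l : List S) (hl : l ≠ []) :
    ENNReal.ofReal (cylWeight A σ₁ σ₂ s₀ l) = cylProb (playLaw A σ₁ σ₂ s₀) l := by
  induction l using List.reverseRecOn with
  | nil => contradiction
  | append_singleton l t ih =>
    rcases List.eq_nil_or_concat' l with rfl | ⟨l, s, rfl⟩
    · by_cases ht : t = s₀ <;>
        simp [cylWeight, MC_singleton_iff, cylProb, playLaw_nil, pathProb, ht]
    · rw [cylProb_append_singleton, ← ih (by simp), playLaw_append_singleton,
        stepLaw_apply σ₁ σ₂ hA, List.append_assoc, List.singleton_append]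
      simp only [cylWeight, MC_append_pair_iff, pathProb_append_pair]
      by_cases hmc : MC A σ₁ σ₂ s₀ (l ++ [s]) <;> by_cases hst : IsStep A σ₁ σ₂ l s t <;>
        simp [hmc, hst, ENNReal.ofReal_mul' (stepProb_nonneg hA s t)]

theorem pathMeasure_eq_trajMeasure (hA : A.Wellformed) :
    pathMeasure A σ₁ σ₂ s₀ = trajMeasure (playLaw A σ₁ σ₂ s₀) := by
  have hex : ∃ μ : Measure (PathSpace S), IsProbabilityMeasure μ ∧
      ∀ l : List S, l ≠ [] → μ (cyl l) = ENNReal.ofReal (cylWeight A σ₁ σ₂ s₀ l) :=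
    ⟨trajMeasure (playLaw A σ₁ σ₂ s₀), inferInstance, fun l hl => by
      rw [trajMeasure_cyl, ofReal_cylWeight σ₁ σ₂ s₀ hA l hl]⟩
  rw [pathMeasure, dif_pos hex]
  have := hex.choose_spec.1
  refine eq_trajMeasure fun l => ?_
  rcases eq_or_ne l [] with rfl | hl
  · simp [cylProb]
  · rw [hex.choose_spec.2 l hl, ofReal_cylWeight σ₁ σ₂ s₀ hA l hl]

end PlayLaw

/-- A 2½-player parity game: a well-formed arena with priorities and with rewards in `[0,1]`. -/
structure ParityGame (S : Type) where
  arena : Arena S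
  pri : S → ℕ
  rew : S → ℝ
  wf : arena.Wellformed
  rew_mem : ∀ s, rew s ∈ Set.Icc 0 1

namespace Strategy

variable {A : Arena S} {pl : Player}

instance : Nonempty (Strategy A pl) :=
  ⟨⟨fun _ s => if h : (A.E s).Nonempty then h.choose else s, fun _ s _ h => by
    have h' := Set.nonempty_iff_ne_empty.2 h
    rw [dif_pos h']
    exact h'.choose_spec⟩⟩

end Strategy

namespace ParityGame

/-- The payoff of a path, as an extended nonnegative real. -/
def pay (G : ParityGame S) (u : PathSpace S) : ℝ≥0∞ :=
  ENNReal.ofReal (payoff G.arena G.pri G.rew u)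

/-- The expected payoff, as an extended nonnegative real; suprema, infima and integrals of
`ℝ≥0∞`-valued functions need no side conditions. -/
def expPay (G : ParityGame S) (σ₁ : Strategy G.arena .one) (σ₂ : Strategy G.arena .two) (s : S) :
    ℝ≥0∞ :=
  ∫⁻ u, G.pay u ∂(trajMeasure (playLaw G.arena σ₁ σ₂ s))

/-- The lower value `Val↓`, as an extended nonnegative real. -/
def lower (G : ParityGame S) (s : S) : ℝ≥0∞ := ⨆ σ₁, ⨅ σ₂, G.expPay σ₁ σ₂ s

/-- The upper value `Val↑`, as an extended nonnegative real. -/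
def upper (G : ParityGame S) (s : S) : ℝ≥0∞ := ⨅ σ₂, ⨆ σ₁, G.expPay σ₁ σ₂ s

variable (G : ParityGame S)

theorem measurable_pay : Measurable G.pay := (measurable_payoff _ _ _).ennreal_ofReal

theorem pay_le_one (u : PathSpace S) : G.pay u ≤ 1 :=
  ENNReal.ofReal_le_one.2 (payoff_mem_Icc _ _ G.rew_mem u).2

theorem expPay_le_one (σ₁ : Strategy G.arena .one) (σ₂ : Strategy G.arena .two) (s : S) :
    G.expPay σ₁ σ₂ s ≤ 1 :=
  (lintegral_mono G.pay_le_one).trans (by simp)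

theorem iInf_expPay_le_one (σ₁ : Strategy G.arena .one) (s : S) :
    ⨅ σ₂, G.expPay σ₁ σ₂ s ≤ 1 :=
  iInf_le_of_le (Classical.arbitrary _) (G.expPay_le_one _ _ s)

theorem iSup_expPay_le_one (σ₂ : Strategy G.arena .two) (s : S) :
    ⨆ σ₁, G.expPay σ₁ σ₂ s ≤ 1 :=
  iSup_le fun _ => G.expPay_le_one _ _ s

theorem upper_le_one (s : S) : G.upper s ≤ 1 :=
  iInf_le_of_le (Classical.arbitrary _) (G.iSup_expPay_le_one _ s)

theorem lower_le_upper (s : S) : G.lower s ≤ G.upper s := iSup_iInf_le_iInf_iSup _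

theorem expReward_eq_toReal (σ₁ : Strategy G.arena .one) (σ₂ : Strategy G.arena .two) (s : S) :
    expReward G.arena G.pri G.rew σ₁ σ₂ s = (G.expPay σ₁ σ₂ s).toReal := by
  rw [expReward, pathMeasure_eq_trajMeasure σ₁ σ₂ s G.wf]
  exact integral_eq_lintegral_of_nonneg_ae
    (.of_forall fun u => (payoff_mem_Icc _ _ G.rew_mem u).1)
    (measurable_payoff _ _ _).aestronglyMeasurable

theorem lowerValue_eq_toReal (s : S) :
    lowerValue G.arena G.pri G.rew s = (G.lower s).toReal := by
  have hne {a : ℝ≥0∞} (h : a ≤ 1) : a ≠ ⊤ := ne_top_of_le_ne_top ENNReal.one_ne_top h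
  simp only [lowerValue, lower, expReward_eq_toReal,
    ENNReal.toReal_iSup fun σ₁ => hne (G.iInf_expPay_le_one σ₁ s),
    ENNReal.toReal_iInf fun σ₂ => hne (G.expPay_le_one _ σ₂ s)]

theorem upperValue_eq_toReal (s : S) :
    upperValue G.arena G.pri G.rew s = (G.upper s).toReal := by
  have hne {a : ℝ≥0∞} (h : a ≤ 1) : a ≠ ⊤ := ne_top_of_le_ne_top ENNReal.one_ne_top h
  simp only [upperValue, upper, expReward_eq_toReal,
    ENNReal.toReal_iInf fun σ₂ => hne (G.iSup_expPay_le_one σ₂ s),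
    ENNReal.toReal_iSup fun σ₁ => hne (G.expPay_le_one σ₁ _ s)]

end ParityGame

section PlayLawShift

variable {A : Arena S}

theorem stepLaw_of_E_eq_empty (σ₁ : Strategy A .one) (σ₂ : Strategy A .two) (h : List S) {s : S}
    (hs : A.E s = ∅) : stepLaw A σ₁ σ₂ h s = PMF.pure s :=
  if_pos hs

theorem stepLaw_of_E_eq_singleton (hA : A.Wellformed) (σ₁ : Strategy A .one)
    (σ₂ : Strategy A .two) (h : List S) {s t : S} (hs : A.E s = {t}) :
    stepLaw A σ₁ σ₂ h s = PMF.pure t := by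
  have hE : A.E s ≠ ∅ := hs ▸ Set.singleton_ne_empty t
  have hnext {t'} (h : t' ∈ A.E s) : t' = t := by rwa [hs] at h
  cases ho : A.owner s with
  | one => simp only [stepLaw, hE, ho, if_false, hnext (σ₁.valid h s ho hE)]
  | two => simp only [stepLaw, hE, ho, if_false, hnext (σ₂.valid h s ho hE)]
  | nature =>
    obtain ⟨h₀, h₁, h₂⟩ := hA s ho
    have hzero (x : S) (hx : x ≠ t) : A.prob s x = 0 := by
      have : x ∉ A.E s := by rwa [hs]
      simpa [h₂] using this
    have hone : A.prob s t = 1 := (hasSum_single t hzero).unique h₁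
    ext x
    rcases eq_or_ne x t with rfl | hx
    · simp [stepLaw, hE, ho, natureLaw_apply h₀ h₁, hone]
    · simp [stepLaw, hE, ho, natureLaw_apply h₀ h₁, hzero x hx, hx]

theorem stepLaw_congr {B : Arena S} {σ₁ : Strategy A .one} {σ₂ : Strategy A .two}
    {τ₁ : Strategy B .one} {τ₂ : Strategy B .two} {h : List S} {s : S} (hE : A.E s = B.E s)
    (howner : A.owner s = B.owner s) (hprob : A.prob s = B.prob s)
    (h₁ : σ₁.next h s = τ₁.next h s) (h₂ : σ₂.next h s = τ₂.next h s) :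
    stepLaw A σ₁ σ₂ h s = stepLaw B τ₁ τ₂ h s := by
  have hnature : natureLaw A s = natureLaw B s := by
    unfold natureLaw
    rw [hprob]
  simp only [stepLaw, hnature, hE, howner, h₁, h₂]

end PlayLawShift

namespace Strategy

variable {A : Arena S} {pl : Player}

@[ext]
theorem ext {τ τ' : Strategy A pl} (h : ∀ l s, τ.next l s = τ'.next l s) : τ = τ' := by
  cases τ
  cases τ'
  congr
  exact funext₂ h

/-- The strategy `τ` as played once the states of `h` have been visited. -/
def after (h : List S) (τ : Strategy A pl) : Strategy A pl where
  next l s := τ.next (h ++ l) s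
  valid l s := τ.valid (h ++ l) s

/-- The strategy that disregards the first visited state and then plays `τ`. -/
def delay (τ : Strategy A pl) : Strategy A pl where
  next l s := τ.next l.tail s
  valid l s := τ.valid l.tail s

theorem after_singleton_delay (s : S) (τ : Strategy A pl) : τ.delay.after [s] = τ := rfl

/-- The strategy that plays `τ` until some state `t ∈ T` is left for the first time, and plays
`θ t`, with the history restarted, from then on. -/
def switchAt (T : Set S) (τ : Strategy A pl) (θ : S → Strategy A pl) : Strategy A pl where
  next l s :=
    match l.dropWhile (· ∉ T) with
    | [] => τ.next l s
    | t :: l' => (θ t).next l' s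
  valid l s ho hE := by
    split
    exacts [τ.valid _ s ho hE, (θ _).valid _ s ho hE]

theorem switchAt_next_of_forall_notMem {T : Set S} (τ : Strategy A pl) (θ : S → Strategy A pl)
    {l : List S} (hl : ∀ x ∈ l, x ∉ T) (s : S) : (switchAt T τ θ).next l s = τ.next l s := by
  have hdrop : l.dropWhile (· ∉ T) = [] := List.dropWhile_eq_nil_iff.2 (by simpa using hl)
  simp only [switchAt, hdrop]

theorem after_switchAt {T : Set S} (τ : Strategy A pl) (θ : S → Strategy A pl)
    {h : List S} (hh : ∀ x ∈ h, x ∉ T) {t : S} (ht : t ∈ T) :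
    (switchAt T τ θ).after (h ++ [t]) = θ t := by
  ext l s
  have hdrop : (h ++ [t] ++ l).dropWhile (· ∉ T) = t :: l := by
    rw [List.append_assoc, List.dropWhile_append_of_pos (by simpa using hh)]
    simp [ht]
  simp only [after, switchAt, hdrop]

/-- The choices of `relay`. -/
def relayNext (T : Set S) (τ : ℕ → S → Strategy A pl) (k : ℕ) (t : S) (l : List S) (s : S) : S :=
  match h : l.dropWhile (· ∉ T) with
  | [] => (τ k t).next l s
  | t' :: l' => relayNext T τ (k + 1) t' l' s
termination_by l.length
decreasing_by
  have := (List.dropWhile_sublist (l := l) (· ∉ T)).length_le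
  rw [h, List.length_cons] at this
  exact this

/-- The strategy that plays `τ k t` until some state of `T` is left, and then, each time another
state `t'` of `T` is left, moves on to `τ k' t'` for the next value of `k'`, with the history
restarted. -/
def relay (T : Set S) (τ : ℕ → S → Strategy A pl) (k : ℕ) (t : S) : Strategy A pl where
  next := relayNext T τ k t
  valid l s ho hE := by
    fun_induction relayNext T τ k t l s with
    | case1 => exact (τ _ _).valid _ _ ho hE
    | case2 _ _ _ _ _ _ ih => exact ih

theorem relay_eq_switchAt (T : Set S) (τ : ℕ → S → Strategy A pl) (k : ℕ) (t : S) :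
    relay T τ k t = switchAt T (τ k t) (relay T τ (k + 1)) := by
  ext l s
  simp only [relay, switchAt]
  rw [relayNext]
  split <;> next hdrop => simp only [hdrop]

end Strategy

theorem playLaw_append_cons {A : Arena S} {σ₁ : Strategy A .one} {σ₂ : Strategy A .two}
    {h : List S} {t t' : S} (ht : stepLaw A σ₁ σ₂ h t = PMF.pure t') (s₀ : S) :
    (fun l => playLaw A σ₁ σ₂ s₀ (h ++ t :: l)) =
      playLaw A (σ₁.after (h ++ [t])) (σ₂.after (h ++ [t])) t' := by
  funext l
  rcases List.eq_nil_or_concat' l with rfl | ⟨l, s, rfl⟩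
  · rw [playLaw_append_singleton, ht, playLaw_nil]
  · rw [playLaw_append_singleton, ← List.cons_append, ← List.append_assoc,
      playLaw_append_singleton, List.append_cons]
    rfl

namespace ParityGame

variable (G : ParityGame S)

theorem pay_cons {s : S} {u : PathSpace S} (h : G.arena.E s = ∅ → u 0 = s) :
    G.pay (cons s u) = G.pay u := by
  rw [pay, payoff_cons _ _ h, pay]

theorem prefixInvariant_pay (T : Set S) : PrefixInvariant T {s | G.arena.E s = ∅} G.pay :=
  fun _ _ _ hu => G.pay_cons hu

theorem pay_cons_of_terminal {s : S} (hs : G.arena.E s = ∅) (u : PathSpace S) :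
    G.pay (cons s u) = ENNReal.ofReal (G.rew s) := by
  rw [pay, payoff_of_first_terminal (n := 0) hs (by simp), cons_zero]

theorem expPay_of_E_eq_singleton {s t : S} (hs : G.arena.E s = {t})
    (σ₁ : Strategy G.arena .one) (σ₂ : Strategy G.arena .two) :
    G.expPay σ₁ σ₂ s = G.expPay (σ₁.after [s]) (σ₂.after [s]) t := by
  have hE : G.arena.E s ≠ ∅ := hs ▸ Set.singleton_ne_empty t
  have hstep := stepLaw_of_E_eq_singleton G.wf σ₁ σ₂ [] hs
  have hlaw := playLaw_append_cons hstep s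
  simp only [List.nil_append] at hlaw
  rw [expPay, trajMeasure_eq_map_of_pure (playLaw_nil σ₁ σ₂ s), hlaw,
    lintegral_map G.measurable_pay (measurable_cons s), expPay]
  simp only [G.pay_cons fun h => absurd h hE]

theorem exists_lower_le_expPay_add (s : S) {δ : ℝ≥0∞} (hδ : δ ≠ 0) :
    ∃ σ₁, ∀ σ₂, G.lower s ≤ G.expPay σ₁ σ₂ s + δ := by
  by_contra! h
  have hle : G.lower s + δ ≤ G.lower s := by
    conv_lhs => rw [lower, ENNReal.iSup_add]
    refine iSup_le fun σ₁ => ?_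
    obtain ⟨σ₂, hσ₂⟩ := h σ₁
    exact (add_le_add (iInf_le _ σ₂) le_rfl).trans hσ₂.le
  have hfin : G.lower s ≠ ⊤ :=
    ne_top_of_le_ne_top ENNReal.one_ne_top ((G.lower_le_upper s).trans (G.upper_le_one s))
  exact hle.not_gt (ENNReal.lt_add_right hfin hδ)

theorem exists_expPay_le_upper_add (s : S) {δ : ℝ≥0∞} (hδ : δ ≠ 0) :
    ∃ σ₂, ∀ σ₁, G.expPay σ₁ σ₂ s ≤ G.upper s + δ := by
  have hfin : G.upper s ≠ ⊤ := ne_top_of_le_ne_top ENNReal.one_ne_top (G.upper_le_one s)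
  obtain ⟨σ₂, hσ₂⟩ := iInf_lt_iff.1 (ENNReal.lt_add_right hfin hδ)
  exact ⟨σ₂, fun σ₁ => (le_iSup (G.expPay · σ₂ s) σ₁).trans hσ₂.le⟩

theorem lower_le_lower_of_E_eq_singleton {s t : S} (hs : G.arena.E s = {t}) :
    G.lower t ≤ G.lower s := by
  refine iSup_le fun σ₁ => le_iSup_of_le σ₁.delay (le_iInf fun σ₂ => ?_)
  rw [G.expPay_of_E_eq_singleton hs, Strategy.after_singleton_delay]
  exact iInf_le _ _

theorem upper_le_upper_of_E_eq_singleton {s t : S} (hs : G.arena.E s = {t}) :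
    G.upper s ≤ G.upper t := by
  refine le_iInf fun σ₂ => iInf_le_of_le σ₂.delay (iSup_le fun σ₁ => ?_)
  rw [G.expPay_of_E_eq_singleton hs, Strategy.after_singleton_delay]
  exact le_iSup (fun σ₁ => G.expPay σ₁ σ₂ t) _

end ParityGame

theorem lintegral_trajMeasure_le_add_of_firstVisit {T E : Set S} {f f' : PathSpace S → ℝ≥0∞}
    (mf : Measurable f) (mf' : Measurable f') (hf : PrefixInvariant T E f)
    (hf' : PrefixInvariant T E f') {D D' : List S → PMF S} {c : ℝ≥0∞}
    (hD : ∀ h : List S, (∀ x ∈ h, x ∉ T) → D h = D' h)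
    (hE : ∀ h : List S, ∀ s ∈ E, D (h ++ [s]) = PMF.pure s)
    (hT : ∀ h : List S, (∀ x ∈ h, x ∉ T) → ∀ t ∈ T,
      ∫⁻ u, f (cons t u) ∂(trajMeasure fun l => D (h ++ t :: l)) ≤
        ∫⁻ u, f' (cons t u) ∂(trajMeasure fun l => D' (h ++ t :: l)) + c)
    (hmiss : ∀ u, (∀ n, u n ∉ T) → f u ≤ f' u) :
    ∫⁻ u, f u ∂(trajMeasure D) ≤ ∫⁻ u, f' u ∂(trajMeasure D') + c := by
  have hadd (D : List S → PMF S) (g : PathSpace S → ℝ≥0∞) :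
      ∫⁻ u, (g u + c) ∂(trajMeasure D) = ∫⁻ u, g u ∂(trajMeasure D) + c := by
    simp [lintegral_add_right _ measurable_const]
  rw [← hadd]
  refine lintegral_trajMeasure_le_of_firstVisit mf (mf'.add_const c) hf
    (fun s hs u hu => congrArg (· + c) (hf' s hs u hu)) hD hE (fun h hh t ht => ?_)
    fun u hu => (hmiss u hu).trans le_self_add
  exact (hT h hh t ht).trans (hadd _ fun u => f' (cons t u)).ge

/-- `A` unfolds `B` at `T`: the games agree off `T`, and the states `t ∈ T`, which are terminal
in `B`, lead to `body t` in `A`. -/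
structure Unfolding (A B : ParityGame S) (T : Set S) (body : S → S) : Prop where
  E_eq : ∀ s ∉ T, A.arena.E s = B.arena.E s
  owner_eq : ∀ s ∉ T, A.arena.owner s = B.arena.owner s
  prob_eq : ∀ s ∉ T, A.arena.prob s = B.arena.prob s
  pri_eq : ∀ s ∉ T, A.pri s = B.pri s
  rew_eq : ∀ s ∉ T, A.rew s = B.rew s
  E_left : ∀ t ∈ T, A.arena.E t = {body t}
  E_right : ∀ t ∈ T, B.arena.E t = ∅

namespace Unfolding

variable {A B : ParityGame S} {T : Set S} {body : S → S} (U : Unfolding A B T body)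

include U

theorem E_left_ne_empty {t : S} (ht : t ∈ T) : A.arena.E t ≠ ∅ :=
  U.E_left t ht ▸ Set.singleton_ne_empty _

/-- The restriction to the smaller game of a strategy in the unfolded one. -/
def restrict {pl : Player} (τ : Strategy A.arena pl) : Strategy B.arena pl where
  next := τ.next
  valid l s ho hE := by
    have hs : s ∉ T := fun hs => hE (U.E_right s hs)
    rw [← U.E_eq s hs]
    exact τ.valid l s (U.owner_eq s hs ▸ ho) (U.E_eq s hs ▸ hE)

/-- The extension of a strategy to the unfolded game, where the choice at `T` is forced. -/
def extend {pl : Player} (τ : Strategy B.arena pl) : Strategy A.arena pl where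
  next l s := if s ∈ T then body s else τ.next l s
  valid l s ho hE := by
    split_ifs with hs
    · rw [U.E_left s hs]
      exact Set.mem_singleton _
    · rw [U.E_eq s hs]
      exact τ.valid l s (U.owner_eq s hs ▸ ho) (U.E_eq s hs ▸ hE)

theorem extend_next {pl : Player} (τ : Strategy B.arena pl) (l : List S) {s : S} (hs : s ∉ T) :
    (U.extend τ).next l s = τ.next l s :=
  if_neg hs

theorem pay_eq {u : PathSpace S} (hu : ∀ n, u n ∉ T) : A.pay u = B.pay u := by
  rw [ParityGame.pay, ParityGame.pay, payoff_congr (fun n => U.E_eq _ (hu n))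
    (fun n => U.pri_eq _ (hu n)) fun n => U.rew_eq _ (hu n)]

theorem prefixInvariant_pay_right : PrefixInvariant T {s | A.arena.E s = ∅} B.pay :=
  fun s hs _ hu => B.pay_cons fun h => hu ((U.E_eq s hs).trans h)

theorem playLaw_eq {σ₁ : Strategy A.arena .one} {σ₂ : Strategy A.arena .two}
    {τ₁ : Strategy B.arena .one} {τ₂ : Strategy B.arena .two}
    (h₁ : ∀ l : List S, (∀ x ∈ l, x ∉ T) → ∀ s ∉ T, σ₁.next l s = τ₁.next l s)
    (h₂ : ∀ l : List S, (∀ x ∈ l, x ∉ T) → ∀ s ∉ T, σ₂.next l s = τ₂.next l s)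
    (s₀ : S) {l : List S} (hl : ∀ x ∈ l, x ∉ T) :
    playLaw A.arena σ₁ σ₂ s₀ l = playLaw B.arena τ₁ τ₂ s₀ l := by
  rcases List.eq_nil_or_concat' l with rfl | ⟨l, s, rfl⟩
  · rfl
  · have hl' : ∀ x ∈ l, x ∉ T := fun x hx => hl x (List.mem_append_left _ hx)
    have hs : s ∉ T := hl s (by simp)
    rw [playLaw_append_singleton, playLaw_append_singleton]
    exact stepLaw_congr (U.E_eq s hs) (U.owner_eq s hs) (U.prob_eq s hs) (h₁ l hl' s hs)
      (h₂ l hl' s hs)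

theorem lintegral_pay_right_cons {t : S} (ht : t ∈ T) (μ : Measure (PathSpace S))
    [IsProbabilityMeasure μ] : ∫⁻ u, B.pay (cons t u) ∂μ = ENNReal.ofReal (B.rew t) := by
  simp [B.pay_cons_of_terminal (U.E_right t ht)]

theorem playLaw_left_append_cons (σ₁ : Strategy A.arena .one) (σ₂ : Strategy A.arena .two)
    (s₀ : S) (h : List S) {t : S} (ht : t ∈ T) :
    (fun l => playLaw A.arena σ₁ σ₂ s₀ (h ++ t :: l)) =
      playLaw A.arena (σ₁.after (h ++ [t])) (σ₂.after (h ++ [t])) (body t) :=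
  playLaw_append_cons (stepLaw_of_E_eq_singleton A.wf σ₁ σ₂ h (U.E_left t ht)) s₀

theorem expPay_switchAt_le {σ₁ : Strategy A.arena .one} {τ₂ : Strategy B.arena .two}
    {θ : S → Strategy A.arena .two} {c : ℝ≥0∞}
    (hθ : ∀ t ∈ T, ∀ σ₁, A.expPay σ₁ (θ t) (body t) ≤ ENNReal.ofReal (B.rew t) + c) (s : S) :
    A.expPay σ₁ ((U.extend τ₂).switchAt T θ) s ≤ B.expPay (U.restrict σ₁) τ₂ s + c := by
  refine lintegral_trajMeasure_le_add_of_firstVisit A.measurable_pay B.measurable_pay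
    (A.prefixInvariant_pay T) U.prefixInvariant_pay_right
    (fun h hh => U.playLaw_eq (fun _ _ _ _ => rfl) (fun l hl x hx => ?_) s hh)
    (fun h x hx => ?_) (fun h hh t ht => ?_) fun u hu => (U.pay_eq hu).le
  · rw [Strategy.switchAt_next_of_forall_notMem _ _ hl, U.extend_next _ _ hx]
  · rw [playLaw_append_singleton, stepLaw_of_E_eq_empty _ _ _ hx]
  · simp only [A.pay_cons fun h => absurd h (U.E_left_ne_empty ht)]
    rw [U.lintegral_pay_right_cons ht, U.playLaw_left_append_cons _ _ _ _ ht,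
      Strategy.after_switchAt _ _ hh ht]
    exact hθ t ht _

theorem upper_le_upper (hT : ∀ t ∈ T, A.upper (body t) ≤ ENNReal.ofReal (B.rew t)) (s : S) :
    A.upper s ≤ B.upper s := by
  refine le_iInf fun τ₂ => ENNReal.le_of_forall_pos_le_add fun ε hε _ => ?_
  choose θ hθ using fun t => A.exists_expPay_le_upper_add (body t) (ENNReal.coe_ne_zero.2 hε.ne')
  refine iInf_le_of_le ((U.extend τ₂).switchAt T θ) (iSup_le fun σ₁ => ?_)
  have hbody (t : S) (ht : t ∈ T) (σ₁ : Strategy A.arena .one) :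
      A.expPay σ₁ (θ t) (body t) ≤ ENNReal.ofReal (B.rew t) + ε :=
    (hθ t σ₁).trans (add_le_add (hT t ht) le_rfl)
  exact (U.expPay_switchAt_le hbody s).trans
    (add_le_add (le_iSup (B.expPay · τ₂ s) (U.restrict σ₁)) le_rfl)

theorem expPay_le_lintegral_switchAt {τ₁ : Strategy B.arena .one} {σ₂ : Strategy A.arena .two}
    {θ : S → Strategy A.arena .one} {f : PathSpace S → ℝ≥0∞} (mf : Measurable f)
    (hf : PrefixInvariant T {s | A.arena.E s = ∅} f) (hpay : ∀ u, A.pay u ≤ f u) {c : ℝ≥0∞}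
    (hθ : ∀ t ∈ T, ∀ σ₂, ENNReal.ofReal (B.rew t) ≤
      ∫⁻ u, f (cons t u) ∂(trajMeasure (playLaw A.arena (θ t) σ₂ (body t))) + c) (s : S) :
    B.expPay τ₁ (U.restrict σ₂) s ≤
      ∫⁻ u, f u ∂(trajMeasure (playLaw A.arena ((U.extend τ₁).switchAt T θ) σ₂ s)) + c := by
  refine lintegral_trajMeasure_le_add_of_firstVisit B.measurable_pay mf
    U.prefixInvariant_pay_right hf
    (fun h hh => (U.playLaw_eq (fun l hl x hx => ?_) (fun _ _ _ _ => rfl) s hh).symm)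
    (fun h x hx => ?_) (fun h hh t ht => ?_) fun u hu => (U.pay_eq hu).ge.trans (hpay u)
  · rw [Strategy.switchAt_next_of_forall_notMem _ _ hl, U.extend_next _ _ hx]
  · rw [playLaw_append_singleton, stepLaw_of_E_eq_empty]
    by_cases hxT : x ∈ T
    · exact U.E_right x hxT
    · exact (U.E_eq x hxT).symm.trans hx
  · rw [U.lintegral_pay_right_cons ht, U.playLaw_left_append_cons _ _ _ _ ht,
      Strategy.after_switchAt _ _ hh ht]
    exact hθ t ht _

end Unfolding

section Visits

/-- The paths that visit `T` at least `n` times without meeting a terminal state before. -/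
def visitSet (A : Arena S) (T : Set S) (n : ℕ) : Set (PathSpace S) :=
  {u | ∃ i, (∀ j < i, A.E (u j) ≠ ∅) ∧ n ≤ Nat.count (u · ∈ T) i}

variable {A : Arena S} {T : Set S}

theorem antitone_visitSet : Antitone (visitSet A T) :=
  fun _ _ hmn _ ⟨i, hi, hn⟩ => ⟨i, hi, hmn.trans hn⟩

theorem mem_visitSet_zero (u : PathSpace S) : u ∈ visitSet A T 0 :=
  ⟨0, by simp, Nat.zero_le _⟩

theorem count_cons_mem (s : S) (u : PathSpace S) (i : ℕ) :
    Nat.count (cons s u · ∈ T) (i + 1) = Nat.count (u · ∈ T) i + if s ∈ T then 1 else 0 :=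
  Nat.count_succ' _ _

theorem forall_lt_succ_cons {s : S} {u : PathSpace S} {i : ℕ} :
    (∀ j < i + 1, A.E (cons s u j) ≠ ∅) ↔ A.E s ≠ ∅ ∧ ∀ j < i, A.E (u j) ≠ ∅ :=
  Nat.forall_lt_succ_left

theorem cons_mem_visitSet_succ {t : S} (ht : t ∈ T) (hE : A.E t ≠ ∅) {u : PathSpace S} {n : ℕ} :
    cons t u ∈ visitSet A T (n + 1) ↔ u ∈ visitSet A T n := by
  constructor
  · rintro ⟨_ | i, hi, hn⟩
    · simp at hn
    · rw [count_cons_mem, if_pos ht] at hn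
      exact ⟨i, (forall_lt_succ_cons.1 hi).2, Nat.le_of_succ_le_succ hn⟩
  · rintro ⟨i, hi, hn⟩
    refine ⟨i + 1, forall_lt_succ_cons.2 ⟨hE, hi⟩, ?_⟩
    rw [count_cons_mem, if_pos ht]
    exact Nat.succ_le_succ hn

theorem cons_mem_visitSet {s : S} (hs : s ∉ T) {u : PathSpace S} (hu : A.E s = ∅ → u 0 = s)
    {n : ℕ} : cons s u ∈ visitSet A T n ↔ u ∈ visitSet A T n := by
  constructor
  · rintro ⟨_ | i, hi, hn⟩
    · exact ⟨0, by simp, by simpa using hn⟩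
    · rw [count_cons_mem, if_neg hs] at hn
      exact ⟨i, (forall_lt_succ_cons.1 hi).2, hn⟩
  · rintro ⟨i, hi, hn⟩
    by_cases hE : A.E s = ∅
    · have hi0 : i = 0 := by
        by_contra hne
        exact hi 0 (Nat.pos_of_ne_zero hne) (by rwa [hu hE])
      subst hi0
      exact ⟨0, by simp, by simpa using hn⟩
    · exact ⟨i + 1, forall_lt_succ_cons.2 ⟨hE, hi⟩, by rwa [count_cons_mem, if_neg hs]⟩

theorem measurableSet_visitSet (A : Arena S) (T : Set S) (n : ℕ) :
    MeasurableSet (visitSet A T n) := by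
  have hcount (i : ℕ) : Measurable fun u : PathSpace S => Nat.count (u · ∈ T) i := by
    induction i with
    | zero => simp
    | succ i ih =>
      simp only [Nat.count_succ]
      exact ih.add (.ite (measurableSet_apply_mem i T) measurable_const measurable_const)
  simp only [visitSet, Set.ofPred_exists]
  exact .iUnion fun i => (measurableSet_forall_lt_mem (fun _ => {s | A.E s ≠ ∅}) i).inter
    (hcount i (.of_discrete (s := Set.Ici n)))

theorem infinite_of_forall_mem_visitSet {u : PathSpace S} (hu : ∀ n, u ∈ visitSet A T n) :
    {i | u i ∈ T}.Infinite := by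
  intro hfin
  obtain ⟨i, -, hi⟩ := hu (hfin.toFinset.card + 1)
  rw [Nat.count_eq_card_filter_range] at hi
  exact hi.not_gt (Nat.lt_succ_of_le (Finset.card_le_card fun j => by simp))

theorem E_ne_empty_of_forall_mem_visitSet {u : PathSpace S} (hu : ∀ n, u ∈ visitSet A T n)
    (n : ℕ) : A.E (u n) ≠ ∅ := by
  obtain ⟨i, hi, hn⟩ := hu (n + 1)
  exact hi n (hn.trans (Nat.count_le _))

theorem sSup_infinitely_often_eq {pri : S → ℕ} {u : PathSpace S} {m : ℕ}
    (hle : ∀ s, pri s ≤ m) (hT : ∀ t ∈ T, pri t = m) (hu : {i | u i ∈ T}.Infinite) :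
    sSup {n | {i | pri (u i) = n}.Infinite} = m := by
  refine IsGreatest.csSup_eq ⟨hu.mono fun i hi => hT _ hi, fun n hn => ?_⟩
  obtain ⟨i, rfl⟩ := hn.nonempty
  exact hle _

end Visits

namespace ParityGame

variable (G : ParityGame S) (T : Set S)

/-- The payoff of a path, raised to `1` as soon as the path visits `T` at least `n` times. -/
def visitPay (n : ℕ) (u : PathSpace S) : ℝ≥0∞ :=
  G.pay u ⊔ (visitSet G.arena T n).indicator 1 u

variable {G T}

theorem visitPay_zero (u : PathSpace S) : G.visitPay T 0 u = 1 := by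
  simp [visitPay, mem_visitSet_zero, G.pay_le_one u]

theorem pay_le_visitPay (n : ℕ) (u : PathSpace S) : G.pay u ≤ G.visitPay T n u :=
  le_sup_left

theorem measurable_visitPay (n : ℕ) : Measurable (G.visitPay T n) :=
  G.measurable_pay.sup (measurable_one.indicator (measurableSet_visitSet _ _ n))

theorem prefixInvariant_visitPay (n : ℕ) :
    PrefixInvariant T {s | G.arena.E s = ∅} (G.visitPay T n) := fun s hs u hu => by
  simp only [visitPay, G.pay_cons hu, Set.indicator, Pi.one_apply, cons_mem_visitSet hs hu]

theorem visitPay_succ_cons {t : S} (ht : t ∈ T) (hE : G.arena.E t ≠ ∅) (n : ℕ)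
    (u : PathSpace S) : G.visitPay T (n + 1) (cons t u) = G.visitPay T n u := by
  simp only [visitPay, G.pay_cons fun h => absurd h hE, Set.indicator, Pi.one_apply,
    cons_mem_visitSet_succ ht hE]

theorem pay_eq_one_of_forall_mem_visitSet (heven : ∀ t ∈ T, Even (G.pri t))
    (hmax : ∀ t ∈ T, ∀ s, G.pri s ≤ G.pri t) {u : PathSpace S}
    (hu : ∀ n, u ∈ visitSet G.arena T n) : G.pay u = 1 := by
  have hinf := infinite_of_forall_mem_visitSet hu
  obtain ⟨i, hi⟩ := hinf.nonempty
  rw [pay, payoff_of_infinite (E_ne_empty_of_forall_mem_visitSet hu),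
    sSup_infinitely_often_eq (hmax _ hi)
      (fun t ht => (hmax _ hi t).antisymm (hmax t ht _)) hinf,
    if_pos (heven _ hi), ENNReal.ofReal_one]

theorem iInf_visitPay (heven : ∀ t ∈ T, Even (G.pri t))
    (hmax : ∀ t ∈ T, ∀ s, G.pri s ≤ G.pri t) (u : PathSpace S) :
    ⨅ n, G.visitPay T n u = G.pay u := by
  refine le_antisymm ?_ (le_iInf fun n => pay_le_visitPay n u)
  by_cases hu : ∀ n, u ∈ visitSet G.arena T n
  · exact iInf_le_of_le 0 (by
      rw [visitPay_zero, pay_eq_one_of_forall_mem_visitSet heven hmax hu])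
  · obtain ⟨n, hn⟩ := not_forall.1 hu
    exact iInf_le_of_le n (by simp [visitPay, hn])

theorem lintegral_pay_eq_iInf_visitPay (heven : ∀ t ∈ T, Even (G.pri t))
    (hmax : ∀ t ∈ T, ∀ s, G.pri s ≤ G.pri t) (μ : Measure (PathSpace S)) [IsFiniteMeasure μ] :
    ∫⁻ u, G.pay u ∂μ = ⨅ n, ∫⁻ u, G.visitPay T n u ∂μ := by
  have hanti : Antitone (G.visitPay T) := fun m n hmn u =>
    sup_le_sup_left (Set.indicator_le_indicator_of_subset (antitone_visitSet hmn)
      (fun _ => zero_le) u) _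
  rw [← lintegral_iInf measurable_visitPay hanti (by simp [visitPay_zero])]
  simp only [iInf_visitPay heven hmax]

end ParityGame

namespace Unfolding

variable {A B : ParityGame S} {T : Set S} {body : S → S} (U : Unfolding A B T body)

include U

theorem ofReal_rew_le_lintegral_visitPay_relay
    (hT : ∀ t ∈ T, ENNReal.ofReal (B.rew t) ≤ B.lower (body t)) {ε : ℝ≥0∞}
    {τ : ℕ → S → Strategy B.arena .one}
    (hτ : ∀ k t τ₂, B.lower (body t) ≤ B.expPay (τ k t) τ₂ (body t) + ε * 2⁻¹ ^ (k + 1)) (n : ℕ) :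
    ∀ k, ∀ t ∈ T, ∀ σ₂, ENNReal.ofReal (B.rew t) ≤ ∫⁻ u, A.visitPay T n u
      ∂(trajMeasure (playLaw A.arena (.relay T (fun k t => U.extend (τ k t)) k t) σ₂ (body t))) +
        ε * 2⁻¹ ^ k := by
  induction n with
  | zero =>
    intro k t _ σ₂
    simp only [ParityGame.visitPay_zero, lintegral_const, measure_univ, one_mul]
    exact le_add_right (ENNReal.ofReal_le_one.2 (B.rew_mem t).2)
  | succ n ih =>
    intro k t ht σ₂
    have hhalves : ε * 2⁻¹ ^ k = ε * 2⁻¹ ^ (k + 1) + ε * 2⁻¹ ^ (k + 1) := by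
      rw [pow_succ, ← mul_add, ← mul_add, ENNReal.inv_two_add_inv_two, mul_one]
    rw [Strategy.relay_eq_switchAt, hhalves, ← add_assoc]
    refine ((hT t ht).trans (hτ k t (U.restrict σ₂))).trans (add_le_add ?_ le_rfl)
    refine U.expPay_le_lintegral_switchAt (ParityGame.measurable_visitPay _)
      (ParityGame.prefixInvariant_visitPay _) (ParityGame.pay_le_visitPay _)
      (fun t' ht' σ₂ => ?_) _
    simp only [ParityGame.visitPay_succ_cons ht' (U.E_left_ne_empty ht')]
    exact ih (k + 1) t' ht' σ₂

theorem ofReal_rew_le_lower (heven : ∀ t ∈ T, Even (A.pri t))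
    (hmax : ∀ t ∈ T, ∀ s, A.pri s ≤ A.pri t)
    (hT : ∀ t ∈ T, ENNReal.ofReal (B.rew t) ≤ B.lower (body t)) {t : S} (ht : t ∈ T) :
    ENNReal.ofReal (B.rew t) ≤ A.lower (body t) := by
  refine ENNReal.le_of_forall_pos_le_add fun ε hε _ => ?_
  have hpos (k : ℕ) : (ε : ℝ≥0∞) * 2⁻¹ ^ (k + 1) ≠ 0 := by simp [hε.ne']
  choose τ hτ using fun k t => B.exists_lower_le_expPay_add (body t) (hpos k)
  rw [ParityGame.lower, ENNReal.iSup_add]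
  refine le_iSup_of_le (.relay T (fun k t => U.extend (τ k t)) 0 t) ?_
  rw [ENNReal.iInf_add]
  refine le_iInf fun σ₂ => ?_
  rw [ParityGame.expPay, ParityGame.lintegral_pay_eq_iInf_visitPay heven hmax, ENNReal.iInf_add]
  exact le_iInf fun n => by
    simpa using U.ofReal_rew_le_lintegral_visitPay_relay hT hτ n 0 t ht σ₂

end Unfolding

namespace pLmu

variable {L P : Type}

theorem distExp_mono (d : PDist P) : Monotone (distExp d) := by
  intro g h hgh
  have hsum (g : P → unitInterval) : Summable fun q => d.f q * (g q : ℝ) :=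
    .of_nonneg_of_le (fun q => mul_nonneg (d.nonneg q) (g q).2.1)
      (fun q => mul_le_of_le_one_right (d.nonneg q) (g q).2.2) d.sum_one.summable
  exact Set.monotone_projIcc _ ((hsum g).tsum_le_tsum
    (fun q => mul_le_mul_of_nonneg_left (hgh q) (d.nonneg q)) (hsum h))

theorem sem_mono (M : PLTS L P) (G : pLmu L) : Monotone (sem M G) := by
  induction G with
  | var X => exact fun _ _ h p => h X p
  | dia a G ih =>
    exact fun _ _ h p => sSup_le (Set.forall_mem_image.2 fun d hd =>
      (distExp_mono d (ih h)).trans (le_sSup (Set.mem_image_of_mem _ hd)))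
  | box a G ih =>
    exact fun _ _ h p => le_sInf (Set.forall_mem_image.2 fun d hd =>
      (sInf_le (Set.mem_image_of_mem _ hd)).trans (distExp_mono d (ih h)))
  | or G H ihG ihH => exact fun _ _ h p => sup_le_sup (ihG h p) (ihH h p)
  | and G H ihG ihH => exact fun _ _ h p => inf_le_inf (ihG h p) (ihH h p)
  | mu X G ih =>
    intro ρ ρ' h
    exact sInf_le_sInf fun g hg =>
      (ih (update_le_update_iff.2 ⟨le_rfl, fun Y _ => h Y⟩)).trans hg
  | nu X G ih =>
    intro ρ ρ' h
    exact sSup_le_sSup fun g (hg : g ≤ _) =>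
      hg.trans (ih (update_le_update_iff.2 ⟨le_rfl, fun Y _ => h Y⟩))

theorem le_sem_nu {M : PLTS L P} {G : pLmu L} {X : ℕ} {ρ : ℕ → P → unitInterval}
    {w : P → unitInterval} (h : w ≤ sem M G (Function.update ρ X w)) : w ≤ sem M (.nu X G) ρ :=
  le_sSup (a := w) h

theorem sem_update_sem_nu (M : PLTS L P) (G : pLmu L) (X : ℕ) (ρ : ℕ → P → unitInterval) :
    sem M G (Function.update ρ X (sem M (.nu X G) ρ)) = sem M (.nu X G) ρ :=
  OrderHom.map_gfp ⟨fun w => sem M G (Function.update ρ X w),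
    fun _ _ h => sem_mono M G (update_le_update_iff'.2 h)⟩

theorem varInfo_succ (G : pLmu L) (d Y : ℕ) :
    G.varInfo (d + 1) Y = (G.varInfo d Y).map (Prod.map (· + 1) id) := by
  induction G generalizing d with
  | var _ => rfl
  | dia _ _ ih => exact ih (d + 1)
  | box _ _ ih => exact ih (d + 1)
  | or G H ihG ihH =>
    rw [varInfo, varInfo, ihG, ihH]
    cases G.varInfo (d + 1) Y <;> rfl
  | and G H ihG ihH =>
    rw [varInfo, varInfo, ihG, ihH]
    cases G.varInfo (d + 1) Y <;> rfl
  | mu Z G ih =>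
    rw [varInfo, varInfo]
    split_ifs
    exacts [rfl, ih (d + 1)]
  | nu Z G ih =>
    rw [varInfo, varInfo]
    split_ifs
    exacts [rfl, ih (d + 1)]

theorem varInfo_nu_of_ne (G : pLmu L) {X Y : ℕ} (h : Y ≠ X) :
    (nu X G).varInfo 0 Y = (G.varInfo 0 Y).map (Prod.map (· + 1) id) := by
  rw [varInfo, if_neg h.symm, varInfo_succ]

theorem bodyOf_eq_none_of_notMem_binders {G : pLmu L} {Y : ℕ} (h : Y ∉ G.binders) :
    G.bodyOf Y = none := by
  induction G with
  | var _ => rfl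
  | dia _ G ih => exact ih h
  | box _ G ih => exact ih h
  | or G H ihG ihH =>
    obtain ⟨hG, hH⟩ := not_or.1 (mt List.mem_append.2 h)
    rw [bodyOf, ihG hG, ihH hH, Option.orElse]
  | and G H ihG ihH =>
    obtain ⟨hG, hH⟩ := not_or.1 (mt List.mem_append.2 h)
    rw [bodyOf, ihG hG, ihH hH, Option.orElse]
  | mu Z G ih =>
    rw [bodyOf, if_neg (List.ne_of_not_mem_cons h).symm, ih (List.not_mem_of_not_mem_cons h)]
  | nu Z G ih =>
    rw [bodyOf, if_neg (List.ne_of_not_mem_cons h).symm, ih (List.not_mem_of_not_mem_cons h)]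

end pLmu

section GameOfFormula

variable {L P : Type}

theorem gameArena_wellformed (M : PLTS L P) (F : pLmu L) : (gameArena M F).Wellformed := by
  rintro ⟨p | d, G⟩ hnature
  · exfalso
    cases G with
    | var Y =>
      simp only [gameArena] at hnature
      split at hnature <;> cases hnature
    | _ => cases hnature
  let ι (q : P) : GState L P := (.inl q, G)
  have hι : ι.Injective := fun q q' h => Sum.inl_injective (congrArg Prod.fst h)
  have hprob (q : P) : (gameArena M F).prob (.inr d, G) (ι q) = d.f q := if_pos rfl
  have hzero (t) (ht : t ∉ Set.range ι) : (gameArena M F).prob (.inr d, G) t = 0 := by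
    obtain ⟨q | e, G'⟩ := t
    · exact if_neg fun (hG : G' = G) => ht ⟨q, by rw [hG]⟩
    · rfl
  refine ⟨fun t => ?_, ?_, Set.ext fun t => ?_⟩
  · by_cases ht : t ∈ Set.range ι
    · obtain ⟨q, rfl⟩ := ht
      exact (d.nonneg q).trans_eq (hprob q).symm
    · exact (hzero t ht).ge
  · rw [← hι.hasSum_iff hzero]
    exact (funext hprob : _ ∘ ι = d.f) ▸ d.sum_one
  · constructor
    · rintro ⟨q, hq, rfl⟩
      exact (hprob q).trans_ne hq
    · intro ht
      obtain ⟨q, rfl⟩ := not_imp_comm.1 (hzero t) ht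
      exact ⟨q, (hprob q).symm.trans_ne ht, rfl⟩

theorem gameR_mem_Icc (F : pLmu L) (ρ : ℕ → P → unitInterval) (s : GState L P) :
    gameR F ρ s ∈ Set.Icc (0 : ℝ) 1 := by
  obtain ⟨p | _, G⟩ := s
  · cases G with
    | var X => exact (ρ X p).2
    | _ => simp [gameR]
  · simp [gameR]

/-- The game `𝒢^F_ρ`. -/
def formulaGame (M : PLTS L P) (F : pLmu L) (ρ : ℕ → P → unitInterval) :
    ParityGame (GState L P) where
  arena := gameArena M F
  pri := gamePri F
  rew := gameR F ρ
  wf := gameArena_wellformed M F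
  rew_mem := gameR_mem_Icc F ρ

/-- The game states `⟨q, X⟩` at the variable `X`. -/
def varStates (L P : Type) (X : ℕ) : Set (GState L P) :=
  Set.range fun q => (.inl q, .var X)

theorem ne_of_notMem_varStates {X Y : ℕ} {q : P}
    (h : ((.inl q, .var Y) : GState L P) ∉ varStates L P X) : Y ≠ X :=
  fun hY => h ⟨q, hY ▸ rfl⟩

theorem unfolding_formulaGame_nu (M : PLTS L P) {G : pLmu L} {X : ℕ} (hX : X ∉ G.binders)
    (ρ : ℕ → P → unitInterval) (w : P → unitInterval) :
    Unfolding (formulaGame M (.nu X G) ρ) (formulaGame M G (Function.update ρ X w))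
      (varStates L P X) fun s => (s.1, G) where
  E_eq := by
    rintro ⟨p | d, K⟩ hs
    · cases K with
      | var Y => simp [formulaGame, gameArena, pLmu.bodyOf, (ne_of_notMem_varStates hs).symm]
      | _ => rfl
    · rfl
  owner_eq := by
    rintro ⟨p | d, K⟩ hs
    · cases K with
      | var Y =>
        simp only [formulaGame, gameArena, G.varInfo_nu_of_ne (ne_of_notMem_varStates hs)]
        rcases G.varInfo 0 Y with _ | ⟨_, _ | _⟩ <;> rfl
      | _ => rfl
    · rfl
  prob_eq _ _ := rfl
  pri_eq := by
    rintro ⟨p | d, K⟩ hs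
    · cases K with
      | var Y =>
        simp only [formulaGame, gamePri, G.varInfo_nu_of_ne (ne_of_notMem_varStates hs)]
        rcases G.varInfo 0 Y with _ | ⟨_, _ | _⟩ <;> simp [pLmu.size]
      | _ => rfl
    · rfl
  rew_eq := by
    rintro ⟨p | d, K⟩ hs
    · cases K with
      | var Y => simp [formulaGame, gameR, ne_of_notMem_varStates hs]
      | _ => rfl
    · rfl
  E_left := by
    rintro _ ⟨q, rfl⟩
    simp [formulaGame, gameArena, pLmu.bodyOf]
  E_right := by
    rintro _ ⟨q, rfl⟩
    simp [formulaGame, gameArena, pLmu.bodyOf_eq_none_of_notMem_binders hX]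

theorem gamePri_nu_var (G : pLmu L) (X : ℕ) (q : P) :
    gamePri (.nu X G) (.inl q, .var X) = 2 * (G.size + 1) := by
  simp [gamePri, pLmu.varInfo, pLmu.size]

theorem gamePri_nu_le (G : pLmu L) (X : ℕ) (s : GState L P) :
    gamePri (.nu X G) s ≤ 2 * (G.size + 1) := by
  obtain ⟨p | _, K⟩ := s
  · cases K with
    | var Y =>
      rcases eq_or_ne Y X with rfl | hY
      · exact (gamePri_nu_var G Y p).le
      · simp only [gamePri, G.varInfo_nu_of_ne hY]
        rcases G.varInfo 0 Y with _ | ⟨_, _ | _⟩ <;>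
          simp only [Option.map, Prod.map, pLmu.size, id] <;> omega
    | _ => exact Nat.zero_le _
  · exact Nat.zero_le _

theorem rew_update_var (M : PLTS L P) (G : pLmu L) (X : ℕ) (ρ : ℕ → P → unitInterval)
    (w : P → unitInterval) (q : P) :
    (formulaGame M G (Function.update ρ X w)).rew (.inl q, .var X) = w q := by
  simp [formulaGame, gameR]

end GameOfFormula

theorem ParityGame.eq_lowerValue_and_eq_upperValue_iff (G : ParityGame S) (s : S)
    (r : unitInterval) :
    ((r : ℝ) = lowerValue G.arena G.pri G.rew s ∧
        lowerValue G.arena G.pri G.rew s = upperValue G.arena G.pri G.rew s) ↔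
      G.upper s ≤ ENNReal.ofReal r ∧ ENNReal.ofReal r ≤ G.lower s := by
  have hupper : G.upper s ≠ ⊤ := ne_top_of_le_ne_top ENNReal.one_ne_top (G.upper_le_one s)
  have hle := G.lower_le_upper s
  have hlower : G.lower s ≠ ⊤ := ne_top_of_le_ne_top hupper hle
  rw [G.lowerValue_eq_toReal, G.upperValue_eq_toReal]
  constructor
  · rintro ⟨hr, heq⟩
    rw [hr, ENNReal.ofReal_toReal hlower]
    exact ⟨((ENNReal.toReal_eq_toReal_iff' hlower hupper).1 heq).ge, le_rfl⟩
  · rintro ⟨h₁, h₂⟩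
    have heq : G.lower s = G.upper s := hle.antisymm (h₁.trans h₂)
    rw [← heq, and_iff_left rfl, (heq.trans_le h₁).antisymm h₂, ENNReal.toReal_ofReal r.2.1]

section NuCase

variable {L P : Type} {M : PLTS L P} {G : pLmu L} {X : ℕ}

theorem ofReal_le_lower_nu (hX : X ∉ G.binders) (ρ : ℕ → P → unitInterval)
    {w : P → unitInterval}
    (hw : ∀ q, ENNReal.ofReal (w q) ≤
      (formulaGame M G (Function.update ρ X w)).lower (.inl q, G)) (p : P) :
    ENNReal.ofReal (w p) ≤ (formulaGame M (.nu X G) ρ).lower (.inl p, .nu X G) := by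
  have hunfold := unfolding_formulaGame_nu M hX ρ w
  have hpri (q : P) : (formulaGame M (.nu X G) ρ).pri (.inl q, .var X) = 2 * (G.size + 1) :=
    gamePri_nu_var G X q
  have hbody : ENNReal.ofReal (w p) ≤ (formulaGame M (.nu X G) ρ).lower (.inl p, G) := by
    rw [← rew_update_var M G X ρ w p]
    refine hunfold.ofReal_rew_le_lower ?_ ?_ ?_ (Set.mem_range_self p)
    · rintro _ ⟨q, rfl⟩
      exact (hpri q).symm ▸ even_two_mul _
    · rintro _ ⟨q, rfl⟩ s
      exact (gamePri_nu_le G X s).trans (hpri q).ge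
    · rintro _ ⟨q, rfl⟩
      exact (congrArg ENNReal.ofReal (rew_update_var M G X ρ w q)).trans_le (hw q)
  exact hbody.trans (ParityGame.lower_le_lower_of_E_eq_singleton _ rfl)

theorem exists_upper_nu_le_ofReal (hX : X ∉ G.binders) (ρ : ℕ → P → unitInterval) :
    ∃ w : P → unitInterval,
      (∀ q, (formulaGame M (.nu X G) ρ).upper (.inl q, .nu X G) ≤ ENNReal.ofReal (w q)) ∧
      ∀ q, ENNReal.ofReal (w q) ≤
        (formulaGame M G (Function.update ρ X w)).upper (.inl q, G) := by
  let v (q : P) := (formulaGame M (.nu X G) ρ).upper (.inl q, G)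
  have hv (q : P) : v q ≤ 1 := ParityGame.upper_le_one _ _
  let w (q : P) : unitInterval :=
    ⟨(v q).toReal, ENNReal.toReal_nonneg, ENNReal.toReal_mono ENNReal.one_ne_top (hv q)⟩
  have hw (q : P) : ENNReal.ofReal (w q) = v q :=
    ENNReal.ofReal_toReal (ne_top_of_le_ne_top ENNReal.one_ne_top (hv q))
  refine ⟨w, fun q => ?_, fun q => ?_⟩
  · exact (ParityGame.upper_le_upper_of_E_eq_singleton _ rfl).trans (hw q).ge
  · rw [hw]
    refine (unfolding_formulaGame_nu M hX ρ w).upper_le_upper ?_ _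
    rintro _ ⟨q, rfl⟩
    exact (hw q).ge.trans (congrArg ENNReal.ofReal (rew_update_var M G X ρ w q)).ge

end NuCase

theorem nu_case_of_main_theorem_general {L P : Type} (M : PLTS L P) {G₁ : pLmu L} {X : ℕ}
    (hX : X ∉ G₁.binders) (ρ : ℕ → P → unitInterval)
    (IH : ∀ (w : P → unitInterval) (q : P),
      (pLmu.sem M G₁ (Function.update ρ X w) q : ℝ) =
          lowerValue (gameArena M G₁) (gamePri G₁) (gameR G₁ (Function.update ρ X w))
            (Sum.inl q, G₁) ∧
        lowerValue (gameArena M G₁) (gamePri G₁) (gameR G₁ (Function.update ρ X w))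
            (Sum.inl q, G₁) =
          upperValue (gameArena M G₁) (gamePri G₁) (gameR G₁ (Function.update ρ X w))
            (Sum.inl q, G₁))
    (p : P) :
    (pLmu.sem M (pLmu.nu X G₁) ρ p : ℝ) =
        lowerValue (gameArena M (pLmu.nu X G₁)) (gamePri (pLmu.nu X G₁))
          (gameR (pLmu.nu X G₁) ρ) (Sum.inl p, pLmu.nu X G₁) ∧
      lowerValue (gameArena M (pLmu.nu X G₁)) (gamePri (pLmu.nu X G₁))
          (gameR (pLmu.nu X G₁) ρ) (Sum.inl p, pLmu.nu X G₁) =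
        upperValue (gameArena M (pLmu.nu X G₁)) (gamePri (pLmu.nu X G₁))
          (gameR (pLmu.nu X G₁) ρ) (Sum.inl p, pLmu.nu X G₁) := by
  have hbody (w : P → unitInterval) (q : P) :=
    ((formulaGame M G₁ (Function.update ρ X w)).eq_lowerValue_and_eq_upperValue_iff _ _).1 (IH w q)
  refine ((formulaGame M (.nu X G₁) ρ).eq_lowerValue_and_eq_upperValue_iff _ _).2 ⟨?_, ?_⟩
  · obtain ⟨w, hupper, hw⟩ := exists_upper_nu_le_ofReal (M := M) hX ρ
    have hpost : w ≤ pLmu.sem M G₁ (Function.update ρ X w) := fun q =>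
      (ENNReal.ofReal_le_ofReal_iff (unitInterval.nonneg _)).1 ((hw q).trans (hbody w q).1)
    exact (hupper p).trans (ENNReal.ofReal_le_ofReal (pLmu.le_sem_nu hpost p))
  · refine ofReal_le_lower_nu hX ρ (fun q => ?_) p
    have hfix := congrFun (pLmu.sem_update_sem_nu M G₁ X ρ) q
    exact (congrArg (fun r : unitInterval => ENNReal.ofReal r) hfix).ge.trans (hbody _ q).2

/-- **Inductive step for the greatest fixed point case** of the equivalence of the
denotational and game semantics of pLμ: assuming the equivalence for the body `G₁`
(under every interpretation), the equivalence holds for `νX.G₁`. -/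
theorem nu_case_of_main_theorem {L P : Type} [Countable L]
    (M : PLTS L P) (G₁ : pLmu L) (X : ℕ) (hF : (pLmu.nu X G₁).NormalForm)
    (IH : ∀ (ρ' : ℕ → P → unitInterval) (q : P),
      (pLmu.sem M G₁ ρ' q : ℝ) =
          lowerValue (gameArena M G₁) (gamePri G₁) (gameR G₁ ρ') (Sum.inl q, G₁) ∧
        lowerValue (gameArena M G₁) (gamePri G₁) (gameR G₁ ρ') (Sum.inl q, G₁) =
          upperValue (gameArena M G₁) (gamePri G₁) (gameR G₁ ρ') (Sum.inl q, G₁))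
    (ρ : ℕ → P → unitInterval) (p : P) :
    (pLmu.sem M (pLmu.nu X G₁) ρ p : ℝ) =
        lowerValue (gameArena M (pLmu.nu X G₁)) (gamePri (pLmu.nu X G₁))
          (gameR (pLmu.nu X G₁) ρ) (Sum.inl p, pLmu.nu X G₁) ∧
      lowerValue (gameArena M (pLmu.nu X G₁)) (gamePri (pLmu.nu X G₁))
          (gameR (pLmu.nu X G₁) ρ) (Sum.inl p, pLmu.nu X G₁) =
        upperValue (gameArena M (pLmu.nu X G₁)) (gamePri (pLmu.nu X G₁))
          (gameR (pLmu.nu X G₁) ρ) (Sum.inl p, pLmu.nu X G₁) :=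
  nu_case_of_main_theorem_general M (List.nodup_cons.1 hF.1).1 ρ
    (fun w q => IH (Function.update ρ X w) q) p
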